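/- arXiv:math/0702036 — 3 statements merged into one kernel-verified Lean document; each statement's English description precedes it below -/
import Mathlib

section
/- Let ε > 0 and assume S > 16/ε. If the binary strings x, y of length n satisfy |Σ_{i=1}^n x_i − n/2| ≤ εn/16 and |Σ_{i=1}^n y_i − n/2| ≤ εn/16, then every optimal alignment of x and y aligns at least n/2 − εn/8 pairs of ones, i.e., contains at least n/2 − εn/8 indices i with x_{π(i)} = y_{ν(i)} = 1. -/
/-!
Aligning only ones with ones, in order, gives an alignment of score `m * S`, where `m` is the
smaller of the two numbers of ones. On the other hand a pair of letters that are not both `1`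
scores at most `1` and an alignment has at most `n` pairs, so an alignment with `M` pairs of ones
scores at most `M * S + n`. For an optimal alignment therefore `m ≤ M + n / S`: when `S` is large,
the zeros cannot make up for a linear loss of ones.
-/

open scoped Classical
open Finset

noncomputable section

/-- Score of aligning two letters (`true` = 1, `false` = 0):
`s(1,1) = S`, `s(0,0) = 1`, `s(1,0) = s(0,1) = 0`. -/
def letterScore (S : ℝ) (a b : Bool) : ℝ :=
  if a = true ∧ b = true then S else if a = false ∧ b = false then 1 else 0

/-- Score of the alignment `(π, ν)` of the strings `x` and `y`. -/
def alignScore (S : ℝ) {n k : ℕ} (x y : Fin n → Bool) (π ν : Fin k → Fin n) : ℝ :=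
  ∑ i : Fin k, letterScore S (x (π i)) (y (ν i))

/-- The optimal alignment score of two binary strings of length `n`. -/
def optScore (S : ℝ) (n : ℕ) (x y : Fin n → Bool) : ℝ :=
  sSup {r : ℝ | ∃ (k : ℕ) (π ν : Fin k → Fin n),
    StrictMono π ∧ StrictMono ν ∧ r = alignScore S x y π ν}

/-- The string `x`, extended by the (neutral) letter `true` outside `[0, n)`. -/
def ext {n : ℕ} (x : Fin n → Bool) : ℕ → Bool :=
  fun j => if h : j < n then x ⟨j, h⟩ else true

/-- `blockStart x ℓ i` holds iff a block of zeros of length `ℓ` of `x` starts at position `i`: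
positions `i, …, i+ℓ-1` carry zeros, and they are delimited by ones (or the ends of `x`). -/
def blockStart {n : ℕ} (x : Fin n → Bool) (ℓ i : ℕ) : Prop :=
  0 < ℓ ∧ i + ℓ ≤ n ∧ (∀ j ∈ Finset.Ico i (i + ℓ), ext x j = false) ∧
    (i = 0 ∨ ext x (i - 1) = true) ∧ ext x (i + ℓ) = true

/-- The set of starting positions of blocks of zeros of length `ℓ` in `x`. -/
def starts {n : ℕ} (x : Fin n → Bool) (ℓ : ℕ) : Finset ℕ :=
  (Finset.range n).filter fun i => blockStart x ℓ i

/-- The number of blocks of zeros of length `ℓ` in `x`. -/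
def numBlocks {n : ℕ} (x : Fin n → Bool) (ℓ : ℕ) : ℕ := (starts x ℓ).card

/-- Probability of an event under a uniform random binary string of length `n`. -/
def probX (n : ℕ) (E : (Fin n → Bool) → Prop) : ℝ :=
  ((Finset.univ.filter E).card : ℝ) / 2 ^ n

/-- Probability of an event under two independent uniform random binary strings of length `n`. -/
def probXY (n : ℕ) (E : (Fin n → Bool) → (Fin n → Bool) → Prop) : ℝ :=
  ((Finset.univ.filter (fun p : (Fin n → Bool) × (Fin n → Bool) => E p.1 p.2)).card : ℝ) / 4 ^ n

/-- Expectation of a function of a uniform random binary string of length `n`. -/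
def expX (n : ℕ) (f : (Fin n → Bool) → ℝ) : ℝ := (∑ x, f x) / 2 ^ n

/-- Expectation of a function of two independent uniform random binary strings of length `n`. -/
def expXY (n : ℕ) (f : (Fin n → Bool) → (Fin n → Bool) → ℝ) : ℝ := (∑ x, ∑ y, f x y) / 4 ^ n

/-- The string obtained from `x` by removing one zero from the block of zeros starting at `p`
and inserting one extra zero into the block of zeros starting at `q`. -/
def modifyStr {n : ℕ} (x : Fin n → Bool) (p q : ℕ) : Fin n → Bool :=
  fun i => (((List.ofFn x).eraseIdx p).insertIdx (if p < q then q - 1 else q) false).getD i false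

/-- The number of ones of a binary string. -/
def numOnes {n : ℕ} (x : Fin n → Bool) : ℕ :=
  (Finset.univ.filter fun i => x i = true).card

/-- `(π, ν)` is an optimal alignment of `x` and `y`. -/
def IsOptimal (S : ℝ) {n k : ℕ} (x y : Fin n → Bool) (π ν : Fin k → Fin n) : Prop :=
  StrictMono π ∧ StrictMono ν ∧ alignScore S x y π ν = optScore S n x y

/-- Index `i` of the alignment `(π, ν)` aligns a pair of ones of `x` and `y`. -/
def matchedPair {n k : ℕ} (x y : Fin n → Bool) (π ν : Fin k → Fin n) (i : Fin k) : Prop :=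
  x (π i) = true ∧ y (ν i) = true

/-- The number of pairs of ones aligned by `(π, ν)`. -/
def numMatched {n k : ℕ} (x y : Fin n → Bool) (π ν : Fin k → Fin n) : ℕ :=
  (Finset.univ.filter (matchedPair x y π ν)).card

section Alignment

variable {n k : ℕ} (x y : Fin n → Bool) (π ν : Fin k → Fin n)

theorem letterScore_le_ite_matchedPair_add_one (S : ℝ) (i : Fin k) :
    letterScore S (x (π i)) (y (ν i)) ≤ (if matchedPair x y π ν i then S else 0) + 1 := by
  unfold letterScore matchedPair
  split_ifs <;> simp

theorem numMatched_le_length : numMatched x y π ν ≤ k :=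
  card_finset_fin_le _

theorem alignScore_le_numMatched_mul_add_length (S : ℝ) :
    alignScore S x y π ν ≤ numMatched x y π ν * S + k :=
  calc alignScore S x y π ν
    _ ≤ ∑ i, ((if matchedPair x y π ν i then S else 0) + 1) :=
      sum_le_sum fun i _ ↦ letterScore_le_ite_matchedPair_add_one x y π ν S i
    _ = numMatched x y π ν * S + k := by
      simp [sum_add_distrib, ← sum_filter, numMatched]

theorem alignScore_le_length_mul (S : ℝ) :
    alignScore S x y π ν ≤ k * (|S| + 1) :=
  calc alignScore S x y π ν
    _ ≤ numMatched x y π ν * S + k := alignScore_le_numMatched_mul_add_length x y π ν S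
    _ ≤ numMatched x y π ν * |S| + k := by gcongr; exact le_abs_self S
    _ ≤ k * |S| + k := by gcongr; exact numMatched_le_length x y π ν
    _ = k * (|S| + 1) := by ring

variable {x y π ν}

theorem alignScore_eq_length_mul_of_forall_matchedPair (S : ℝ)
    (h : ∀ i, matchedPair x y π ν i) : alignScore S x y π ν = k * S := by
  have hpair (i : Fin k) : letterScore S (x (π i)) (y (ν i)) = S := if_pos (h i)
  simp [alignScore, hpair]

theorem exists_strictMono_forall_eq_true_of_le_numOnes (hk : k ≤ numOnes x) :
    ∃ π : Fin k → Fin n, StrictMono π ∧ ∀ i, x (π i) = true :=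
  ⟨orderEmbOfCardLe _ hk, OrderEmbedding.strictMono _, fun i ↦
    (mem_filter.1 (orderEmbOfCardLe_mem _ hk i)).2⟩

end Alignment

section OptScore

variable {n : ℕ} (S : ℝ) (x y : Fin n → Bool)

theorem bddAbove_alignScore :
    BddAbove {r : ℝ | ∃ (k : ℕ) (π ν : Fin k → Fin n),
      StrictMono π ∧ StrictMono ν ∧ r = alignScore S x y π ν} := by
  refine ⟨n * (|S| + 1), ?_⟩
  rintro _ ⟨k, π, ν, hπ, -, rfl⟩
  have hk : k ≤ n := Fin.le_of_injective π hπ.injective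
  exact (alignScore_le_length_mul x y π ν S).trans (by gcongr)

theorem alignScore_le_optScore {k : ℕ} {π ν : Fin k → Fin n} (hπ : StrictMono π)
    (hν : StrictMono ν) : alignScore S x y π ν ≤ optScore S n x y :=
  le_csSup (bddAbove_alignScore S x y) ⟨k, π, ν, hπ, hν, rfl⟩

theorem min_numOnes_mul_le_optScore :
    min (numOnes x : ℝ) (numOnes y) * S ≤ optScore S n x y := by
  obtain ⟨π, hπ, hxπ⟩ :=
    exists_strictMono_forall_eq_true_of_le_numOnes (min_le_left (numOnes x) (numOnes y))
  obtain ⟨ν, hν, hyν⟩ :=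
    exists_strictMono_forall_eq_true_of_le_numOnes (min_le_right (numOnes x) (numOnes y))
  calc min (numOnes x : ℝ) (numOnes y) * S
    _ = alignScore S x y π ν := by
      rw [alignScore_eq_length_mul_of_forall_matchedPair S fun i ↦ ⟨hxπ i, hyν i⟩, Nat.cast_min]
    _ ≤ optScore S n x y := alignScore_le_optScore S x y hπ hν

end OptScore

theorem IsOptimal.min_numOnes_le_numMatched_add_div {S : ℝ} (hS : 0 < S) {n k : ℕ}
    {x y : Fin n → Bool} {π ν : Fin k → Fin n} (hopt : IsOptimal S x y π ν) :
    min (numOnes x : ℝ) (numOnes y) ≤ numMatched x y π ν + n / S := by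
  obtain ⟨hπ, -, hscore⟩ := hopt
  have hk : k ≤ n := Fin.le_of_injective π hπ.injective
  refine le_of_mul_le_mul_right ?_ hS
  calc min (numOnes x : ℝ) (numOnes y) * S
    _ ≤ optScore S n x y := min_numOnes_mul_le_optScore S x y
    _ = alignScore S x y π ν := hscore.symm
    _ ≤ numMatched x y π ν * S + k := alignScore_le_numMatched_mul_add_length x y π ν S
    _ ≤ numMatched x y π ν * S + n := by gcongr
    _ = (numMatched x y π ν + n / S) * S := by field_simp

theorem optimal_alignment_matches_most_ones_general {ε S : ℝ} (hε : 0 < ε) (hS : 16 / ε ≤ S)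
    {n : ℕ} {x y : Fin n → Bool}
    (hx : (n : ℝ) / 2 - ε * n / 16 ≤ numOnes x)
    (hy : (n : ℝ) / 2 - ε * n / 16 ≤ numOnes y)
    {k : ℕ} {π ν : Fin k → Fin n} (hopt : IsOptimal S x y π ν) :
    (n : ℝ) / 2 - ε * n / 8 ≤ numMatched x y π ν := by
  have hS₀ : 0 < S := lt_of_lt_of_le (by positivity) hS
  have hmin := (le_min hx hy).trans (hopt.min_numOnes_le_numMatched_add_div hS₀)
  have hdiv : n / S ≤ ε * n / 16 :=
    calc n / S
      _ ≤ n / (16 / ε) := by gcongr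
      _ = ε * n / 16 := by field_simp
  linarith

/-- let `ε > 0` and `S > 16/ε`.  If `x` and `y` are binary strings of length `n`
with `|#ones(x) - n/2| ≤ εn/16` and `|#ones(y) - n/2| ≤ εn/16`, then every optimal alignment
of `x` and `y` aligns at least `n/2 - εn/8` pairs of ones. -/
theorem optimal_alignment_matches_most_ones (ε S : ℝ) (hε : 0 < ε) (hS : 16 / ε < S)
    (n : ℕ) (x y : Fin n → Bool)
    (hx : |(numOnes x : ℝ) - (n : ℝ) / 2| ≤ ε * n / 16)
    (hy : |(numOnes y : ℝ) - (n : ℝ) / 2| ≤ ε * n / 16)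
    (k : ℕ) (π ν : Fin k → Fin n) (hopt : IsOptimal S x y π ν) :
    (n : ℝ) / 2 - ε * n / 8 ≤ (numMatched x y π ν : ℝ) := by
  refine optimal_alignment_matches_most_ones_general hε hS.le ?_ ?_ hopt
  all_goals linarith [(abs_le.1 hx).1, (abs_le.1 hy).1]
end
end

section
/- Let ε₁ > 0 satisfy 35/64 + ε₁/4 < 1. Suppose the realization (x, y) of (X, Y) is such that x contains at least one block of zeros of length 5 and at least one block of zeros of length 1, and there exists an optimal alignment v of x and y with p₅(v) ≥ 31/32 − ε₁/2 and p₁(v) ≥ 1/4 − ε₁/2. Then P(L̃_n − L_n = 1 | X = x, Y = y) ≥ (1/4)·(31/32) − ε₁ and P(L̃_n − L_n = −1 | X = x, Y = y) ≤ 1/32 + ε₁. -/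
/-!
The optimal score is superadditive under concatenation, and `a` zeros against `b` zeros score
`min a b`. Hence, if an optimal alignment has a gap with `ℓ` zeros of `x` facing `b` zeros of `y`
between two matched ones, replacing the `ℓ` zeros by `m` zeros changes the optimal score by at least
`min m b - min ℓ b`. Removing a zero from a block of five facing fewer than five zeros therefore
costs nothing, and extending a block of one zero facing at least two gains a point, which is also
the most that one additional zero can gain. So `L̃ - L = 1` whenever both random blocks are of
these kinds, and `L̃ - L = -1` only if the block of five zeros is not.
-/

open scoped Classical
open Finset

noncomputable section

/-- `probDelta S n x y d` is the conditional probability, given `X = x` and `Y = y`, that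
`L̃_n - L_n = d`, where `X̃` is obtained from `x` by choosing uniformly at random a block of
zeros of length 5 of `x` and removing one zero from it, and choosing uniformly at random a
block of zeros of length 1 of `x` and extending it by the removed zero (with the convention
`X̃ = x` when no block of zeros of length 5 or of length 1 exists). -/
def probDelta (S : ℝ) (n : ℕ) (x y : Fin n → Bool) (d : ℝ) : ℝ :=
  if (starts x 5).Nonempty ∧ (starts x 1).Nonempty then
    ((((starts x 5) ×ˢ (starts x 1)).filter
        (fun pq => optScore S n (modifyStr x pq.1 pq.2) y - optScore S n x y = d)).card : ℝ)
      / (((starts x 5).card : ℝ) * ((starts x 1).card : ℝ))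
  else if d = 0 then 1 else 0

/-- `N₅(v)`: the number of pairs of consecutive matched ones of `x` (with no skipped ones in
between, in either string) enclosing exactly a block of five zeros of `x`, such that only
zeros lie between the corresponding matched ones of `y`. -/
def N5count {n k : ℕ} (x y : Fin n → Bool) (π ν : Fin k → Fin n) : ℕ :=
  ((Finset.univ ×ˢ Finset.univ : Finset (Fin k × Fin k)).filter fun p =>
    p.1 < p.2 ∧ matchedPair x y π ν p.1 ∧ matchedPair x y π ν p.2 ∧
    (π p.2 : ℕ) = (π p.1 : ℕ) + 6 ∧
    (∀ j : Fin n, π p.1 < j → j < π p.2 → x j = false) ∧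
    (∀ j : Fin n, ν p.1 < j → j < ν p.2 → y j = false)).card

/-- `N₅<(v)`: as `N₅(v)`, additionally requiring that the corresponding matched ones of `y`
enclose strictly fewer than five zeros. -/
def N5ltCount {n k : ℕ} (x y : Fin n → Bool) (π ν : Fin k → Fin n) : ℕ :=
  ((Finset.univ ×ˢ Finset.univ : Finset (Fin k × Fin k)).filter fun p =>
    p.1 < p.2 ∧ matchedPair x y π ν p.1 ∧ matchedPair x y π ν p.2 ∧
    (π p.2 : ℕ) = (π p.1 : ℕ) + 6 ∧
    (∀ j : Fin n, π p.1 < j → j < π p.2 → x j = false) ∧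
    (∀ j : Fin n, ν p.1 < j → j < ν p.2 → y j = false) ∧
    (ν p.2 : ℕ) < (ν p.1 : ℕ) + 6).card

/-- `N₁(v)`: the number of pairs of consecutive matched ones of `x` (with no skipped ones in
between, in either string) enclosing exactly one zero of `x`, such that only zeros lie
between the corresponding matched ones of `y`. -/
def N1count {n k : ℕ} (x y : Fin n → Bool) (π ν : Fin k → Fin n) : ℕ :=
  ((Finset.univ ×ˢ Finset.univ : Finset (Fin k × Fin k)).filter fun p =>
    p.1 < p.2 ∧ matchedPair x y π ν p.1 ∧ matchedPair x y π ν p.2 ∧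
    (π p.2 : ℕ) = (π p.1 : ℕ) + 2 ∧
    (∀ j : Fin n, π p.1 < j → j < π p.2 → x j = false) ∧
    (∀ j : Fin n, ν p.1 < j → j < ν p.2 → y j = false)).card

/-- `N₁>(v)`: as `N₁(v)`, additionally requiring that the corresponding matched ones of `y`
enclose two or more zeros. -/
def N1gtCount {n k : ℕ} (x y : Fin n → Bool) (π ν : Fin k → Fin n) : ℕ :=
  ((Finset.univ ×ˢ Finset.univ : Finset (Fin k × Fin k)).filter fun p =>
    p.1 < p.2 ∧ matchedPair x y π ν p.1 ∧ matchedPair x y π ν p.2 ∧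
    (π p.2 : ℕ) = (π p.1 : ℕ) + 2 ∧
    (∀ j : Fin n, π p.1 < j → j < π p.2 → x j = false) ∧
    (∀ j : Fin n, ν p.1 < j → j < ν p.2 → y j = false) ∧
    (ν p.1 : ℕ) + 2 < (ν p.2 : ℕ)).card

lemma insertIdx_append_of_eq_length {α : Type*} (X R : List α) (a : α) {m : ℕ}
    (hm : m = X.length) : (X ++ R).insertIdx m a = X ++ a :: R := by
  subst hm
  induction X with
  | nil => rfl
  | cons c X ih => simpa using ih

lemma eraseIdx_append_replicate_succ {α : Type*} (X R : List α) (a : α) {m ℓ : ℕ}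
    (hm : m = X.length) :
    (X ++ (List.replicate (ℓ + 1) a ++ R)).eraseIdx m = X ++ (List.replicate ℓ a ++ R) := by
  subst hm
  rw [List.eraseIdx_append_of_length_le le_rfl, Nat.sub_self, List.replicate_succ,
    List.cons_append, List.eraseIdx_cons_zero]

lemma insertIdx_append_replicate {α : Type*} (X R : List α) (a : α) {m ℓ : ℕ}
    (hm : m = X.length) :
    (X ++ (List.replicate ℓ a ++ R)).insertIdx m a = X ++ (List.replicate (ℓ + 1) a ++ R) := by
  rw [insertIdx_append_of_eq_length _ _ _ hm, List.replicate_succ, List.cons_append]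

section ListOpt

variable {α β : Type*} {s : α → β → ℝ}

/-- The optimal alignment score of two lists under the letter score `s`. An alignment is encoded
as its list of aligned letter pairs, whose two projections are sublists of the given lists. -/
def listOpt (s : α → β → ℝ) (A : List α) (B : List β) : ℝ :=
  sSup {r | ∃ P : List (α × β), (P.map Prod.fst).Sublist A ∧ (P.map Prod.snd).Sublist B ∧
    r = (P.map (Function.uncurry s)).sum}

lemma finite_setOf_map_sublist (A : List α) (B : List β) :
    {P : List (α × β) | (P.map Prod.fst).Sublist A ∧ (P.map Prod.snd).Sublist B}.Finite := by
  refine ((A.sublists.finite_toSet.prod B.sublists.finite_toSet).image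
    fun L => List.zip L.1 L.2).subset ?_
  rintro P ⟨hA, hB⟩
  exact ⟨(P.map Prod.fst, P.map Prod.snd),
    ⟨List.mem_sublists.2 hA, List.mem_sublists.2 hB⟩, (List.zip_of_prod rfl rfl).symm⟩

lemma finite_alignment_scores (s : α → β → ℝ) (A : List α) (B : List β) :
    {r | ∃ P : List (α × β), (P.map Prod.fst).Sublist A ∧ (P.map Prod.snd).Sublist B ∧
      r = (P.map (Function.uncurry s)).sum}.Finite := by
  refine ((finite_setOf_map_sublist A B).image
    fun P => (P.map (Function.uncurry s)).sum).subset ?_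
  rintro _ ⟨P, hA, hB, rfl⟩
  exact ⟨P, ⟨hA, hB⟩, rfl⟩

lemma sum_le_listOpt {A : List α} {B : List β} {P : List (α × β)}
    (hA : (P.map Prod.fst).Sublist A) (hB : (P.map Prod.snd).Sublist B) :
    (P.map (Function.uncurry s)).sum ≤ listOpt s A B :=
  le_csSup (finite_alignment_scores s A B).bddAbove ⟨P, hA, hB, rfl⟩

lemma exists_sum_eq_listOpt (s : α → β → ℝ) (A : List α) (B : List β) :
    ∃ P : List (α × β), (P.map Prod.fst).Sublist A ∧ (P.map Prod.snd).Sublist B ∧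
      listOpt s A B = (P.map (Function.uncurry s)).sum := by
  refine Set.Nonempty.csSup_mem ?_ (finite_alignment_scores s A B)
  exact ⟨0, [], by simp⟩

lemma listOpt_le_of_sublist {A A' : List α} (h : A.Sublist A') (B : List β) :
    listOpt s A B ≤ listOpt s A' B := by
  obtain ⟨P, hA, hB, hP⟩ := exists_sum_eq_listOpt s A B
  exact hP ▸ sum_le_listOpt (hA.trans h) hB

lemma listOpt_add_le_listOpt_append (A A' : List α) (B B' : List β) :
    listOpt s A B + listOpt s A' B' ≤ listOpt s (A ++ A') (B ++ B') := by
  obtain ⟨P, hA, hB, hP⟩ := exists_sum_eq_listOpt s A B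
  obtain ⟨P', hA', hB', hP'⟩ := exists_sum_eq_listOpt s A' B'
  rw [hP, hP', ← List.sum_append, ← List.map_append]
  exact sum_le_listOpt (List.map_append ▸ hA.append hA') (List.map_append ▸ hB.append hB')

lemma add_le_listOpt_append {A A' : List α} {B B' : List β} {r r' : ℝ} (h : r ≤ listOpt s A B)
    (h' : r' ≤ listOpt s A' B') : r + r' ≤ listOpt s (A ++ A') (B ++ B') :=
  (add_le_add h h').trans (listOpt_add_le_listOpt_append A A' B B')

lemma listOpt_append_cons_le {a : α} {c : ℝ} (hc : 0 ≤ c) (ha : ∀ b, s a b ≤ c)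
    (X R : List α) (B : List β) :
    listOpt s (X ++ a :: R) B ≤ listOpt s (X ++ R) B + c := by
  obtain ⟨P, hA, hB, hP⟩ := exists_sum_eq_listOpt s (X ++ a :: R) B
  rw [hP]
  obtain ⟨l, l', hPl, hl, hl'⟩ := List.sublist_append_iff.1 hA
  rcases List.sublist_cons_iff.1 hl' with hR | ⟨r, rfl, hR⟩
  · exact (sum_le_listOpt (hPl ▸ hl.append hR) hB).trans (le_add_of_nonneg_right hc)
  · obtain ⟨P₁, P', rfl, rfl, hP'⟩ := List.map_eq_append_iff.1 hPl
    obtain ⟨⟨_, b⟩, P₂, rfl, rfl, rfl⟩ := List.map_eq_cons_iff.1 hP'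
    have hdrop : ((P₁ ++ P₂).map (Function.uncurry s)).sum ≤ listOpt s (X ++ R) B := by
      refine sum_le_listOpt (List.map_append ▸ hl.append hR) (.trans ?_ hB)
      exact (List.Sublist.append_left (List.sublist_cons_self _ _) _).map _
    simp only [List.map_append, List.map_cons, List.sum_append, List.sum_cons,
      Function.uncurry_apply_pair] at hdrop ⊢
    linarith [ha b]

lemma listOpt_insertIdx_le {a : α} {c : ℝ} (hc : 0 ≤ c) (ha : ∀ b, s a b ≤ c)
    (A : List α) (B : List β) (m : ℕ) :
    listOpt s (A.insertIdx m a) B ≤ listOpt s A B + c := by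
  rcases le_or_gt m A.length with hm | hm
  · have h := listOpt_append_cons_le hc ha (A.take m) (A.drop m) B
    rwa [← insertIdx_append_of_eq_length _ _ _ (List.length_take_of_le hm).symm,
      List.take_append_drop] at h
  · rw [List.insertIdx_of_length_lt hm]
    exact le_add_of_nonneg_right hc

lemma listOpt_replicate {u : α} {v : β} (h : 0 ≤ s u v) (a b : ℕ) :
    listOpt s (List.replicate a u) (List.replicate b v) = (min a b : ℕ) * s u v := by
  have hsum (m : ℕ) : ((List.replicate m (u, v)).map (Function.uncurry s)).sum = m * s u v := by
    simp
  refine le_antisymm ?_ ?_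
  · obtain ⟨P, hA, hB, hP⟩ := exists_sum_eq_listOpt s (List.replicate a u) (List.replicate b v)
    have hconst : P = List.replicate P.length (u, v) :=
      List.eq_replicate_of_mem fun p hp => Prod.ext
        (List.eq_of_mem_replicate (hA.subset (List.mem_map_of_mem hp)))
        (List.eq_of_mem_replicate (hB.subset (List.mem_map_of_mem hp)))
    have hlen : P.length ≤ min a b :=
      le_min (by simpa using hA.length_le) (by simpa using hB.length_le)
    rw [hP, hconst, hsum]
    gcongr
  · rw [← hsum]
    refine sum_le_listOpt ?_ ?_
    · rw [List.map_replicate]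
      exact (List.replicate_sublist_replicate _).2 (min_le_left _ _)
    · rw [List.map_replicate]
      exact (List.replicate_sublist_replicate _).2 (min_le_right _ _)

end ListOpt

section Strings

variable {α β ι : Type*} {s : α → β → ℝ} {n : ℕ}

lemma exists_strictMono_of_map_sublist_ofFn {γ : Type*} {x : Fin n → α} {P : List γ}
    {g : γ → α} (h : (P.map g).Sublist (List.ofFn x)) :
    ∃ f : Fin P.length → Fin n, StrictMono f ∧ ∀ i, x (f i) = g (P.get i) := by
  obtain ⟨f, hf⟩ := List.sublist_iff_exists_fin_orderEmbedding_get_eq.1 h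
  refine ⟨fun i => (f (i.cast (by simp))).cast (by simp), fun i j hij => f.strictMono hij, ?_⟩
  intro i
  simpa [Fin.cast] using (hf (i.cast (by simp))).symm

/-- The letters `f a, …, f (b - 1)`, as a list. -/
def seg (f : ℕ → α) (a b : ℕ) : List α := (List.Ico a b).map f

@[simp]
lemma length_seg (f : ℕ → α) (a b : ℕ) : (seg f a b).length = b - a := by
  simp [seg]

lemma seg_append_seg (f : ℕ → α) {a b c : ℕ} (hab : a ≤ b) (hbc : b ≤ c) :
    seg f a b ++ seg f b c = seg f a c := by
  rw [seg, seg, ← List.map_append, List.Ico.append_consecutive hab hbc, seg]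

lemma seg_eq_replicate {f : ℕ → α} {a b : ℕ} {u : α} (h : ∀ t, a ≤ t → t < b → f t = u) :
    seg f a b = List.replicate (b - a) u := by
  refine List.eq_replicate_iff.2 ⟨length_seg f a b, fun c hc => ?_⟩
  obtain ⟨t, ht, rfl⟩ := List.mem_map.1 hc
  exact h t (List.Ico.mem.1 ht).1 (List.Ico.mem.1 ht).2

lemma map_sublist_seg [LinearOrder ι] {π : ι → ℕ} (hπ : StrictMono π) (f : ℕ → α) {a b : ℕ}
    {I : Finset ι} (hI : ∀ i ∈ I, a ≤ π i ∧ π i < b) :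
    ((I.sort (· ≤ ·)).map (f ∘ π)).Sublist (seg f a b) := by
  have hsorted : ((I.sort (· ≤ ·)).map π).SortedLE :=
    ((Finset.pairwise_sort I _).map π fun _ _ h => hπ.monotone h).sortedLE
  have hsub : (I.sort (· ≤ ·)).map π ⊆ List.Ico a b := by
    intro t ht
    obtain ⟨i, hi, rfl⟩ := List.mem_map.1 ht
    exact List.Ico.mem.2 (hI i ((Finset.mem_sort _).1 hi))
  have hnodup : ((I.sort (· ≤ ·)).map π).Nodup := (Finset.sort_nodup I _).map hπ.injective
  rw [← List.map_map]
  exact (List.sublist_of_subperm_of_sortedLE (hnodup.subperm hsub) hsorted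
    (List.Ico.pairwise_lt a b).sortedLT.sortedLE).map f

lemma sum_le_listOpt_seg [LinearOrder ι] {π ν : ι → ℕ} (hπ : StrictMono π) (hν : StrictMono ν)
    (f : ℕ → α) (g : ℕ → β) {a a' b b' : ℕ} {I : Finset ι}
    (hI : ∀ i ∈ I, (a ≤ π i ∧ π i < a') ∧ b ≤ ν i ∧ ν i < b') :
    ∑ i ∈ I, s (f (π i)) (g (ν i)) ≤ listOpt s (seg f a a') (seg g b b') := by
  have h := sum_le_listOpt (s := s) (P := (I.sort (· ≤ ·)).map fun i => (f (π i), g (ν i)))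
    (A := seg f a a') (B := seg g b b')
    (by rw [List.map_map]; exact map_sublist_seg hπ f fun i hi => (hI i hi).1)
    (by rw [List.map_map]; exact map_sublist_seg hν g fun i hi => (hI i hi).2)
  rwa [List.map_map, ← Multiset.sum_coe, ← Multiset.map_coe, Finset.sort_eq] at h

end Strings

section OptScore

variable {n : ℕ}

lemma letterScore_false_le_one (S : ℝ) (b : Bool) : letterScore S false b ≤ 1 := by
  cases b <;> simp [letterScore]

lemma ext_coe (x : Fin n → Bool) (i : Fin n) : _root_.ext x i = x i := by
  simp [_root_.ext]

lemma ofFn_eq_seg (x : Fin n → Bool) : List.ofFn x = seg (_root_.ext x) 0 n := by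
  refine List.ext_getElem (by simp) fun i hi _ => ?_
  have hin : i < n := by simpa using hi
  simp [seg, List.Ico, _root_.ext, hin]

lemma optScore_eq_listOpt (S : ℝ) (x y : Fin n → Bool) :
    optScore S n x y = listOpt (letterScore S) (List.ofFn x) (List.ofFn y) := by
  refine IsGreatest.csSup_eq ⟨?_, ?_⟩
  · obtain ⟨P, hx, hy, hP⟩ := exists_sum_eq_listOpt (letterScore S) (List.ofFn x) (List.ofFn y)
    obtain ⟨π, hπ, hxπ⟩ := exists_strictMono_of_map_sublist_ofFn hx
    obtain ⟨ν, hν, hyν⟩ := exists_strictMono_of_map_sublist_ofFn hy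
    refine ⟨P.length, π, ν, hπ, hν, ?_⟩
    simp only [hP, alignScore, hxπ, hyν, ← Fin.sum_univ_fun_getElem, List.get_eq_getElem,
      Function.uncurry_def]
  · rintro _ ⟨k, π, ν, hπ, hν, rfl⟩
    have h := sum_le_listOpt_seg (s := letterScore S) (π := fun i => (π i : ℕ))
      (ν := fun i => (ν i : ℕ)) hπ hν (_root_.ext x) (_root_.ext y) (a := 0) (a' := n) (b := 0)
      (b' := n) (I := univ) (by simp)
    simpa only [alignScore, ext_coe, ← ofFn_eq_seg] using h

lemma ofFn_modifyStr (x : Fin n → Bool) {p q : ℕ} (hp : p < n) (hq : q < n) :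
    List.ofFn (modifyStr x p q) =
      ((List.ofFn x).eraseIdx p).insertIdx (if p < q then q - 1 else q) false := by
  have hlen : (((List.ofFn x).eraseIdx p).insertIdx
      (if p < q then q - 1 else q) false).length = n := by
    have herase : ((List.ofFn x).eraseIdx p).length = n - 1 := by
      simp [List.length_eraseIdx_of_lt, hp]
    rw [List.length_insertIdx_of_le_length, herase]
    · omega
    · rw [herase]
      split_ifs <;> omega
  refine List.ext_getElem (by simp [hlen]) fun i _ hi => ?_
  simp only [List.getElem_ofFn, modifyStr, List.getD_eq_getElem _ _ hi]

lemma listOpt_eraseIdx_le_optScore_modifyStr (S : ℝ) (x y : Fin n → Bool) {p q : ℕ}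
    (hp : p < n) (hq : q < n) :
    listOpt (letterScore S) ((List.ofFn x).eraseIdx p) (List.ofFn y) ≤
      optScore S n (modifyStr x p q) y := by
  rw [optScore_eq_listOpt, ofFn_modifyStr x hp hq]
  exact listOpt_le_of_sublist (List.sublist_insertIdx _ _ _) _

lemma optScore_modifyStr_le_add_one (S : ℝ) (x y : Fin n → Bool) {p q : ℕ}
    (hp : p < n) (hq : q < n) :
    optScore S n (modifyStr x p q) y ≤ optScore S n x y + 1 := by
  rw [optScore_eq_listOpt, optScore_eq_listOpt, ofFn_modifyStr x hp hq]
  exact (listOpt_insertIdx_le zero_le_one (letterScore_false_le_one S) _ _ _).trans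
    (add_le_add_left (listOpt_le_of_sublist (List.eraseIdx_sublist _ _) _) 1)

end OptScore

section Gap

variable {S : ℝ} {n k : ℕ} {x y : Fin n → Bool} {π ν : Fin k → Fin n} {i j i' j' : Fin k}
  {ℓ ℓ' m b b' : ℕ}

/-- The matched ones with indices `i < j` enclose exactly `ℓ` letters of `x` and `b` letters of
`y`, all of them zeros. -/
structure IsGap (x y : Fin n → Bool) (π ν : Fin k → Fin n) (i j : Fin k) (ℓ b : ℕ) : Prop where
  lt : i < j
  matched_left : matchedPair x y π ν i
  matched_right : matchedPair x y π ν j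
  x_right : (π j : ℕ) = π i + (ℓ + 1)
  x_zero : ∀ t : Fin n, π i < t → t < π j → x t = false
  y_right : (ν j : ℕ) = ν i + (b + 1)
  y_zero : ∀ t : Fin n, ν i < t → t < ν j → y t = false

lemma seg_ext_eq_replicate {z : Fin n → Bool} {t u : Fin n} {c : ℕ} (hu : (u : ℕ) = t + (c + 1))
    (h : ∀ r : Fin n, t < r → r < u → z r = false) :
    seg (_root_.ext z) (t + 1) u = List.replicate c false := by
  rw [seg_eq_replicate (u := false), hu, Nat.add_sub_add_left, Nat.add_sub_cancel]
  intro r htr hru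
  simpa only [← ext_coe z] using h ⟨r, hru.trans u.2⟩ htr hru

lemma IsGap.succ_lt (h : IsGap x y π ν i j ℓ b) : (π i : ℕ) + 1 < n := by
  have := h.x_right
  have := (π j).2
  omega

lemma IsGap.le_of_lt (hπ : StrictMono π) (h : IsGap x y π ν i j ℓ b)
    (hi' : matchedPair x y π ν i') (hlt : i < i') : j ≤ i' := by
  by_contra! hj
  have hzero := h.x_zero (π i') (hπ hlt) (hπ hj)
  exact Bool.false_ne_true (hzero.symm.trans hi'.1)

lemma IsGap.length_eq (hπ : StrictMono π) (h : IsGap x y π ν i j ℓ b)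
    (h' : IsGap x y π ν i j' m b') : ℓ = m := by
  have hj : j = j' :=
    le_antisymm (h.le_of_lt hπ h'.matched_right h'.lt) (h'.le_of_lt hπ h.matched_right h.lt)
  have := h.x_right
  have := hj ▸ h'.x_right
  omega

lemma IsGap.mem_starts (h : IsGap x y π ν i j ℓ b) (hℓ : 0 < ℓ) : (π i : ℕ) + 1 ∈ starts x ℓ := by
  have hj := (π j).2
  have hright := h.x_right
  simp only [starts, mem_filter, mem_range, blockStart, mem_Ico]
  refine ⟨by omega, hℓ, by omega, fun t ht => ?_, Or.inr ?_, ?_⟩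
  · have hzero := h.x_zero ⟨t, by omega⟩ (Fin.lt_def.2 (by dsimp only; omega))
      (Fin.lt_def.2 (by dsimp only; omega))
    simpa only [← ext_coe x] using hzero
  · rw [Nat.add_sub_cancel, ext_coe]
    exact h.matched_left.1
  · rw [show (π i : ℕ) + 1 + ℓ = π j by omega, ext_coe]
    exact h.matched_right.1

/-- The score collected by the pairs of the alignment `(π, ν)` with indices in `I`. -/
def partialScore (S : ℝ) (x y : Fin n → Bool) (π ν : Fin k → Fin n) (I : Finset (Fin k)) : ℝ :=
  ∑ l ∈ I, letterScore S (x (π l)) (y (ν l))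

lemma partialScore_le_listOpt_seg (hπ : StrictMono π) (hν : StrictMono ν) {a a' c c' : ℕ}
    {I : Finset (Fin k)} (hI : ∀ l ∈ I, (a ≤ π l ∧ (π l : ℕ) < a') ∧ c ≤ ν l ∧ (ν l : ℕ) < c') :
    partialScore S x y π ν I ≤
      listOpt (letterScore S) (seg (_root_.ext x) a a') (seg (_root_.ext y) c c') := by
  have h := sum_le_listOpt_seg (s := letterScore S) (π := fun l => (π l : ℕ))
    (ν := fun l => (ν l : ℕ)) hπ hν (_root_.ext x) (_root_.ext y) hI
  simpa only [ext_coe, partialScore] using h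

lemma IsGap.partialScore_Ioo_add_le (h : IsGap x y π ν i j ℓ b) (hπ : StrictMono π)
    (hν : StrictMono ν) (m : ℕ) :
    partialScore S x y π ν (Ioo i j) + ((min m b : ℕ) - (min ℓ b : ℕ)) ≤
      listOpt (letterScore S) (List.replicate m false) (seg (_root_.ext y) (ν i + 1) (ν j)) := by
  have hgap := partialScore_le_listOpt_seg (S := S) (x := x) (y := y) hπ hν (I := Ioo i j)
    (a := π i + 1) (a' := π j) (c := ν i + 1) (c' := ν j) fun l hl => by
      rw [mem_Ioo] at hl
      exact ⟨⟨hπ hl.1, hπ hl.2⟩, hν hl.1, hν hl.2⟩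
  have hzeros : letterScore S false false = 1 := by simp [letterScore]
  rw [seg_ext_eq_replicate h.x_right h.x_zero] at hgap
  rw [seg_ext_eq_replicate h.y_right h.y_zero] at hgap ⊢
  rw [listOpt_replicate (by simp [hzeros]), hzeros, mul_one] at hgap ⊢
  linarith

lemma partialScore_Iic_le (S : ℝ) (x y : Fin n → Bool) (hπ : StrictMono π)
    (hν : StrictMono ν) (i : Fin k) :
    partialScore S x y π ν (Iic i) ≤
      listOpt (letterScore S) (seg (_root_.ext x) 0 (π i + 1)) (seg (_root_.ext y) 0 (ν i + 1)) :=
  partialScore_le_listOpt_seg hπ hν fun l hl => by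
    have hli := mem_Iic.1 hl
    exact ⟨⟨Nat.zero_le _, Nat.lt_succ_of_le (hπ.monotone hli)⟩,
      Nat.zero_le _, Nat.lt_succ_of_le (hν.monotone hli)⟩

lemma partialScore_Icc_le (S : ℝ) (x y : Fin n → Bool) (hπ : StrictMono π)
    (hν : StrictMono ν) (j i : Fin k) :
    partialScore S x y π ν (Icc j i) ≤ listOpt (letterScore S)
      (seg (_root_.ext x) (π j) (π i + 1)) (seg (_root_.ext y) (ν j) (ν i + 1)) :=
  partialScore_le_listOpt_seg hπ hν fun l hl => by
    obtain ⟨hjl, hli⟩ := mem_Icc.1 hl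
    exact ⟨⟨hπ.monotone hjl, Nat.lt_succ_of_le (hπ.monotone hli)⟩,
      hν.monotone hjl, Nat.lt_succ_of_le (hν.monotone hli)⟩

lemma partialScore_Ici_le (S : ℝ) (x y : Fin n → Bool) (hπ : StrictMono π)
    (hν : StrictMono ν) (j : Fin k) :
    partialScore S x y π ν (Ici j) ≤
      listOpt (letterScore S) (seg (_root_.ext x) (π j) n) (seg (_root_.ext y) (ν j) n) :=
  partialScore_le_listOpt_seg hπ hν fun l hl => by
    have hjl := mem_Ici.1 hl
    exact ⟨⟨hπ.monotone hjl, (π l).2⟩, hν.monotone hjl, (ν l).2⟩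

lemma partialScore_union {I J : Finset (Fin k)} (h : Disjoint I J) :
    partialScore S x y π ν (I ∪ J) = partialScore S x y π ν I + partialScore S x y π ν J :=
  sum_union h

lemma partialScore_Ici_eq (S : ℝ) (x y : Fin n → Bool) (π ν : Fin k → Fin n)
    (hji : j ≤ i) (hij' : i < j') :
    partialScore S x y π ν (Ici j) = partialScore S x y π ν (Icc j i) +
      (partialScore S x y π ν (Ioo i j') + partialScore S x y π ν (Ici j')) := by
  have hsplit : Ici j = Icc j i ∪ (Ioo i j' ∪ Ici j') := by
    ext l
    simp only [mem_union, mem_Icc, mem_Ioo, mem_Ici]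
    omega
  rw [hsplit, partialScore_union, partialScore_union]
  · simp only [Finset.disjoint_left, mem_Ioo, mem_Ici]
    omega
  · simp only [Finset.disjoint_left, mem_Icc, mem_union, mem_Ioo, mem_Ici]
    omega

lemma IsOptimal.optScore_eq (hopt : IsOptimal S x y π ν) (hij : i < j) :
    optScore S n x y = partialScore S x y π ν (Iic i) +
      (partialScore S x y π ν (Ioo i j) + partialScore S x y π ν (Ici j)) := by
  have hsplit : (univ : Finset (Fin k)) = Iic i ∪ (Ioo i j ∪ Ici j) := by
    ext l
    simp only [mem_univ, mem_union, mem_Iic, mem_Ioo, mem_Ici, true_iff]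
    omega
  rw [← hopt.2.2, alignScore, ← partialScore, hsplit, partialScore_union, partialScore_union]
  · simp only [Finset.disjoint_left, mem_Ioo, mem_Ici]
    omega
  · simp only [Finset.disjoint_left, mem_Iic, mem_union, mem_Ioo, mem_Ici]
    omega

/-- The alignment is kept outside the gap, whose zeros are realigned optimally. -/
lemma IsGap.optScore_add_le (hopt : IsOptimal S x y π ν) (h : IsGap x y π ν i j ℓ b) (m : ℕ) :
    optScore S n x y + ((min m b : ℕ) - (min ℓ b : ℕ)) ≤ listOpt (letterScore S)
      (seg (_root_.ext x) 0 (π i + 1) ++ (List.replicate m false ++ seg (_root_.ext x) (π j) n))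
      (List.ofFn y) := by
  have hπ := hopt.1
  have hν := hopt.2.1
  have hy : List.ofFn y = seg (_root_.ext y) 0 (ν i + 1) ++
      (seg (_root_.ext y) (ν i + 1) (ν j) ++ seg (_root_.ext y) (ν j) n) := by
    rw [seg_append_seg _ (hν h.lt) (ν j).2.le, seg_append_seg _ (Nat.zero_le _) (ν i).2,
      ofFn_eq_seg]
  have hsum := add_le_listOpt_append (partialScore_Iic_le S x y hπ hν i)
    (add_le_listOpt_append (h.partialScore_Ioo_add_le hπ hν m) (partialScore_Ici_le S x y hπ hν j))
  rw [← hy] at hsum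
  linarith [hopt.optScore_eq h.lt]

lemma IsGap.optScore_add_add_le (hopt : IsOptimal S x y π ν) (h : IsGap x y π ν i j ℓ b)
    (h' : IsGap x y π ν i' j' ℓ' b') (hji' : j ≤ i') (m m' : ℕ) :
    optScore S n x y + ((min m b : ℕ) - (min ℓ b : ℕ) + ((min m' b' : ℕ) - (min ℓ' b' : ℕ))) ≤
      listOpt (letterScore S)
        (seg (_root_.ext x) 0 (π i + 1) ++ (List.replicate m false ++
          (seg (_root_.ext x) (π j) (π i' + 1) ++ (List.replicate m' false ++
            seg (_root_.ext x) (π j') n))))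
        (List.ofFn y) := by
  have hπ := hopt.1
  have hν := hopt.2.1
  have hy : List.ofFn y = seg (_root_.ext y) 0 (ν i + 1) ++ (seg (_root_.ext y) (ν i + 1) (ν j) ++
      (seg (_root_.ext y) (ν j) (ν i' + 1) ++ (seg (_root_.ext y) (ν i' + 1) (ν j') ++
        seg (_root_.ext y) (ν j') n))) := by
    have hle : (ν j : ℕ) ≤ ν i' := hν.monotone hji'
    rw [seg_append_seg _ (hν h'.lt) (ν j').2.le,
      seg_append_seg _ (hle.trans (Nat.le_succ _)) (ν i').2,
      seg_append_seg _ (hν h.lt) (ν j).2.le, seg_append_seg _ (Nat.zero_le _) (ν i).2, ofFn_eq_seg]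
  have hsum := add_le_listOpt_append (partialScore_Iic_le S x y hπ hν i)
    (add_le_listOpt_append (h.partialScore_Ioo_add_le hπ hν m)
      (add_le_listOpt_append (partialScore_Icc_le S x y hπ hν j i')
        (add_le_listOpt_append (h'.partialScore_Ioo_add_le hπ hν m')
          (partialScore_Ici_le S x y hπ hν j'))))
  rw [← hy] at hsum
  linarith [hopt.optScore_eq h.lt,
    partialScore_Ici_eq S x y π ν hji' h'.lt]

lemma IsGap.seg_eq (h : IsGap x y π ν i j ℓ b) {a c : ℕ} (ha : a ≤ π i + 1) (hc : π j ≤ c) :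
    seg (_root_.ext x) a c = seg (_root_.ext x) a (π i + 1) ++
      (List.replicate ℓ false ++ seg (_root_.ext x) (π j) c) := by
  have hij : (π i : ℕ) + 1 ≤ π j := by
    have := h.x_right
    omega
  rw [← seg_ext_eq_replicate h.x_right h.x_zero, seg_append_seg _ hij hc,
    seg_append_seg _ ha (hij.trans hc)]

lemma IsGap.ofFn_eq (h : IsGap x y π ν i j ℓ b) :
    List.ofFn x = seg (_root_.ext x) 0 (π i + 1) ++
      (List.replicate ℓ false ++ seg (_root_.ext x) (π j) n) := by
  rw [ofFn_eq_seg, h.seg_eq (Nat.zero_le _) (π j).2.le]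

lemma IsGap.ofFn_eq_of_le (h : IsGap x y π ν i j ℓ b) (h' : IsGap x y π ν i' j' ℓ' b')
    (hji' : (π j : ℕ) ≤ π i') :
    List.ofFn x = seg (_root_.ext x) 0 (π i + 1) ++ (List.replicate ℓ false ++
      (seg (_root_.ext x) (π j) (π i' + 1) ++ (List.replicate ℓ' false ++
        seg (_root_.ext x) (π j') n))) := by
  rw [h.ofFn_eq, h'.seg_eq (hji'.trans (Nat.le_succ _)) (π j').2.le]

lemma IsGap.optScore_le_optScore_modifyStr (hopt : IsOptimal S x y π ν)
    (h : IsGap x y π ν i j (ℓ + 1) b) (hb : b ≤ ℓ) {q : ℕ} (hq : q < n) :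
    optScore S n x y ≤ optScore S n (modifyStr x (π i + 1) q) y := by
  have herase : (List.ofFn x).eraseIdx (π i + 1) = seg (_root_.ext x) 0 (π i + 1) ++
      (List.replicate ℓ false ++ seg (_root_.ext x) (π j) n) := by
    rw [h.ofFn_eq, eraseIdx_append_replicate_succ _ _ _ (by simp)]
  have hgain := h.optScore_add_le hopt ℓ
  rw [min_eq_right hb, min_eq_right (hb.trans (Nat.le_succ ℓ)), sub_self, add_zero,
    ← herase] at hgain
  exact hgain.trans (listOpt_eraseIdx_le_optScore_modifyStr S x y h.succ_lt hq)

lemma IsGap.optScore_add_one_le_optScore_modifyStr (hopt : IsOptimal S x y π ν)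
    (h : IsGap x y π ν i j (ℓ + 1) b) (hb : b ≤ ℓ) (h' : IsGap x y π ν i' j' ℓ' b')
    (hb' : ℓ' < b') (hne : ℓ + 1 ≠ ℓ') :
    optScore S n x y + 1 ≤ optScore S n (modifyStr x (π i + 1) (π i' + 1)) y := by
  have hπ := hopt.1
  have hshort : ((min ℓ b : ℕ) : ℝ) - (min (ℓ + 1) b : ℕ) = 0 := by
    rw [min_eq_right hb, min_eq_right (hb.trans (Nat.le_succ ℓ)), sub_self]
  have hlong : ((min (ℓ' + 1) b' : ℕ) : ℝ) - (min ℓ' b' : ℕ) = 1 := by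
    rw [min_eq_left hb', min_eq_left hb'.le, Nat.cast_succ, add_sub_cancel_left]
  have hright := h.x_right
  have hright' := h'.x_right
  rw [optScore_eq_listOpt S (modifyStr _ _ _), ofFn_modifyStr x h.succ_lt h'.succ_lt]
  rcases lt_trichotomy i i' with hlt | rfl | hlt
  · have hji' := h.le_of_lt hπ h'.matched_left hlt
    have hle : (π j : ℕ) ≤ π i' := hπ.monotone hji'
    have hgain := h.optScore_add_add_le hopt h' hji' ℓ (ℓ' + 1)
    rw [hshort, hlong, zero_add] at hgain
    rw [if_pos (by omega), h.ofFn_eq_of_le h' hle,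
      eraseIdx_append_replicate_succ _ _ _ (by simp), ← List.append_assoc (List.replicate ℓ _),
      ← List.append_assoc, insertIdx_append_replicate _ _ _ (by simp; omega)]
    simpa only [List.append_assoc] using hgain
  · exact absurd (h.length_eq hπ h') hne
  · have hj'i := h'.le_of_lt hπ h.matched_left hlt
    have hle : (π j' : ℕ) ≤ π i := hπ.monotone hj'i
    have hgain := h'.optScore_add_add_le hopt h hj'i (ℓ' + 1) ℓ
    rw [hshort, hlong, add_zero] at hgain
    rw [if_neg (by omega), h'.ofFn_eq_of_le h hle, ← List.append_assoc (List.replicate ℓ' _),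
      ← List.append_assoc, eraseIdx_append_replicate_succ _ _ _ (by simp; omega)]
    simp only [List.append_assoc]
    rwa [insertIdx_append_replicate _ _ _ (by simp)]

/-- The starting positions of the blocks of `ℓ` zeros of `x` that fill a gap of the alignment
`(π, ν)` whose number of zeros of `y` satisfies `R`. -/
def facing (x y : Fin n → Bool) (π ν : Fin k → Fin n) (ℓ : ℕ) (R : ℕ → Prop) : Finset ℕ :=
  (starts x ℓ).filter fun p => ∃ i j b, IsGap x y π ν i j ℓ b ∧ π i + 1 = p ∧ R b

lemma facing_subset (x y : Fin n → Bool) (π ν : Fin k → Fin n) (ℓ : ℕ) (R : ℕ → Prop) :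
    facing x y π ν ℓ R ⊆ starts x ℓ :=
  filter_subset _ _

lemma card_le_card_facing (hπ : StrictMono π) (hℓ : 0 < ℓ) {R : ℕ → Prop}
    {T : Finset (Fin k × Fin k)} (hT : ∀ c ∈ T, ∃ b, IsGap x y π ν c.1 c.2 ℓ b ∧ R b) :
    T.card ≤ (facing x y π ν ℓ R).card := by
  refine card_le_card_of_injOn (fun c => π c.1 + 1) (fun c hc => ?_) ?_
  · obtain ⟨b, hgap, hb⟩ := hT c hc
    exact mem_filter.2 ⟨hgap.mem_starts hℓ, c.1, c.2, b, hgap, rfl, hb⟩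
  · rintro ⟨i, j⟩ hc ⟨i', j'⟩ hc' hstart
    obtain ⟨b, hgap, -⟩ := hT _ hc
    obtain ⟨b', hgap', -⟩ := hT _ hc'
    obtain rfl : i = i' := hπ.injective (Fin.ext (Nat.succ_injective hstart))
    have hend : (π j : ℕ) = π j' := hgap.x_right.trans hgap'.x_right.symm
    rw [hπ.injective (Fin.ext hend)]

lemma N5ltCount_le_card_facing (hπ : StrictMono π) (hν : StrictMono ν) :
    N5ltCount x y π ν ≤ (facing x y π ν 5 (· ≤ 4)).card := by
  refine card_le_card_facing hπ (by norm_num) fun c hc => ?_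
  obtain ⟨-, hlt, hleft, hright, hx, hx0, hy0, hb⟩ := mem_filter.1 hc
  have hlt' : (ν c.1 : ℕ) < ν c.2 := hν hlt
  exact ⟨ν c.2 - ν c.1 - 1, ⟨hlt, hleft, hright, hx, hx0, by omega, hy0⟩, by omega⟩

lemma N1gtCount_le_card_facing (hπ : StrictMono π) :
    N1gtCount x y π ν ≤ (facing x y π ν 1 (1 < ·)).card := by
  refine card_le_card_facing hπ one_pos fun c hc => ?_
  obtain ⟨-, hlt, hleft, hright, hx, hx0, hy0, hb⟩ := mem_filter.1 hc
  exact ⟨ν c.2 - ν c.1 - 1, ⟨hlt, hleft, hright, hx, hx0, by omega, hy0⟩, by omega⟩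

lemma optScore_le_optScore_modifyStr_of_mem_facing (hopt : IsOptimal S x y π ν) {p q : ℕ}
    (hp : p ∈ facing x y π ν (ℓ + 1) (· ≤ ℓ)) (hq : q < n) :
    optScore S n x y ≤ optScore S n (modifyStr x p q) y := by
  obtain ⟨-, i, j, b, hgap, rfl, hb⟩ := mem_filter.1 hp
  exact hgap.optScore_le_optScore_modifyStr hopt hb hq

lemma optScore_modifyStr_sub_eq_one_of_mem_facing (hopt : IsOptimal S x y π ν) {p q : ℕ}
    (hp : p ∈ facing x y π ν (ℓ + 1) (· ≤ ℓ)) (hq : q ∈ facing x y π ν m (m < ·))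
    (hne : ℓ + 1 ≠ m) :
    optScore S n (modifyStr x p q) y - optScore S n x y = 1 := by
  obtain ⟨-, i, j, b, hgap, rfl, hb⟩ := mem_filter.1 hp
  obtain ⟨-, i', j', b', hgap', rfl, hb'⟩ := mem_filter.1 hq
  have hge := hgap.optScore_add_one_le_optScore_modifyStr hopt hb hgap' hb' hne
  have hle := optScore_modifyStr_le_add_one S x y hgap.succ_lt hgap'.succ_lt
  linarith

end Gap

section Probability

variable {S : ℝ} {n : ℕ} {x y : Fin n → Bool} {d : ℝ} {G G' : Finset ℕ}

lemma card_div_mul_card_div_le_probDelta (h5 : (starts x 5).Nonempty)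
    (h1 : (starts x 1).Nonempty) (hG : G ⊆ starts x 5) (hG' : G' ⊆ starts x 1)
    (h : ∀ p ∈ G, ∀ q ∈ G', optScore S n (modifyStr x p q) y - optScore S n x y = d) :
    (G.card / numBlocks x 5 : ℝ) * (G'.card / numBlocks x 1) ≤ probDelta S n x y d := by
  rw [probDelta, if_pos ⟨h5, h1⟩, numBlocks, numBlocks, div_mul_div_comm, ← Nat.cast_mul,
    ← card_product]
  gcongr
  intro c hc
  obtain ⟨hp, hq⟩ := mem_product.1 hc
  exact mem_filter.2 ⟨mem_product.2 ⟨hG hp, hG' hq⟩, h _ hp _ hq⟩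

lemma probDelta_le_one_sub_card_div (h5 : (starts x 5).Nonempty) (h1 : (starts x 1).Nonempty)
    (hG : G ⊆ starts x 5)
    (h : ∀ p ∈ G, ∀ q ∈ starts x 1, optScore S n (modifyStr x p q) y - optScore S n x y ≠ d) :
    probDelta S n x y d ≤ 1 - G.card / numBlocks x 5 := by
  have h5pos : (0 : ℝ) < (starts x 5).card := Nat.cast_pos.2 h5.card_pos
  have h1pos : (0 : ℝ) < (starts x 1).card := Nat.cast_pos.2 h1.card_pos
  calc probDelta S n x y d
      ≤ ((starts x 5 \ G) ×ˢ starts x 1).card / ((starts x 5).card * (starts x 1).card) := by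
        rw [probDelta, if_pos ⟨h5, h1⟩]
        gcongr
        intro c hc
        obtain ⟨hmem, hd⟩ := mem_filter.1 hc
        obtain ⟨hp, hq⟩ := mem_product.1 hmem
        exact mem_product.2 ⟨mem_sdiff.2 ⟨hp, fun hpG => h _ hpG _ hq hd⟩, hq⟩
    _ = 1 - G.card / numBlocks x 5 := by
        rw [card_product, Nat.cast_mul, card_sdiff_of_subset hG, Nat.cast_sub (card_le_card hG),
          mul_div_mul_right _ _ h1pos.ne', sub_div, div_self h5pos.ne', numBlocks]

end Probability

lemma mul_sub_le_mul_of_sub_half_le {a b α β ε : ℝ} (hε : 0 ≤ ε) (ha₀ : 0 ≤ a) (ha₁ : a ≤ 1)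
    (hβ₀ : 0 ≤ β) (hβ₁ : β ≤ 1) (ha : α - ε / 2 ≤ a) (hb : β - ε / 2 ≤ b) :
    β * α - ε ≤ a * b :=
  calc β * α - ε ≤ β * (α - ε / 2) - 1 * (ε / 2) := by nlinarith
    _ ≤ β * a - a * (ε / 2) := by gcongr
    _ = a * (β - ε / 2) := by ring
    _ ≤ a * b := by gcongr

lemma N5ltCount_div_numBlocks_le_one {n k : ℕ} {x y : Fin n → Bool} {π ν : Fin k → Fin n}
    (hπ : StrictMono π) (hν : StrictMono ν) : (N5ltCount x y π ν / numBlocks x 5 : ℝ) ≤ 1 := by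
  refine div_le_one_of_le₀ (Nat.cast_le.2 ?_) (Nat.cast_nonneg _)
  exact (N5ltCount_le_card_facing hπ hν).trans (card_le_card (facing_subset _ _ _ _ _ _))

theorem bias_from_p5_p1_general (S : ℝ) (n : ℕ) (x y : Fin n → Bool)
    (h5 : (starts x 5).Nonempty) (h1 : (starts x 1).Nonempty)
    (k : ℕ) (π ν : Fin k → Fin n) (hopt : IsOptimal S x y π ν) :
    (N5ltCount x y π ν / numBlocks x 5 : ℝ) * (N1gtCount x y π ν / numBlocks x 1) ≤
        probDelta S n x y 1 ∧
      probDelta S n x y (-1) ≤ 1 - N5ltCount x y π ν / numBlocks x 5 := by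
  have hN5 := N5ltCount_le_card_facing (x := x) (y := y) hopt.1 hopt.2.1
  have hN1 := N1gtCount_le_card_facing (x := x) (y := y) (ν := ν) hopt.1
  have hsub5 := facing_subset x y π ν 5 (· ≤ 4)
  constructor
  · refine le_trans ?_ (card_div_mul_card_div_le_probDelta h5 h1 hsub5
      (facing_subset x y π ν 1 (1 < ·)) fun p hp q hq =>
        optScore_modifyStr_sub_eq_one_of_mem_facing hopt hp hq (by norm_num))
    gcongr
  · refine (probDelta_le_one_sub_card_div h5 h1 hsub5 fun p hp q hq => ?_).trans ?_
    · have hqn : q < n := mem_range.1 (mem_filter.1 hq).1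
      have := optScore_le_optScore_modifyStr_of_mem_facing hopt hp hqn
      linarith
    · gcongr

/-- let `ε₁ > 0` satisfy `35/64 + ε₁/4 < 1`.  If `x` contains at least one block
of zeros of length 5 and one of length 1, and some optimal alignment `v` of `x` and `y`
satisfies `p₅(v) ≥ 31/32 - ε₁/2` and `p₁(v) ≥ 1/4 - ε₁/2`, then
`P(L̃_n - L_n = 1 | X = x, Y = y) ≥ (1/4)(31/32) - ε₁` and
`P(L̃_n - L_n = -1 | X = x, Y = y) ≤ 1/32 + ε₁`. -/
theorem bias_from_p5_p1 (ε₁ S : ℝ) (hε₁ : 0 < ε₁) (hS : 0 < S)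
    (hcond : 35 / 64 + ε₁ / 4 < 1)
    (n : ℕ) (x y : Fin n → Bool)
    (h5 : (starts x 5).Nonempty) (h1 : (starts x 1).Nonempty)
    (k : ℕ) (π ν : Fin k → Fin n) (hopt : IsOptimal S x y π ν)
    (hp5 : 31 / 32 - ε₁ / 2 ≤ (N5ltCount x y π ν : ℝ) / (numBlocks x 5 : ℝ))
    (hp1 : 1 / 4 - ε₁ / 2 ≤ (N1gtCount x y π ν : ℝ) / (numBlocks x 1 : ℝ)) :
    (1 : ℝ) / 4 * (31 / 32) - ε₁ ≤ probDelta S n x y 1 ∧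
      probDelta S n x y (-1) ≤ 1 / 32 + ε₁ := by
  obtain ⟨hgain, hloss⟩ := bias_from_p5_p1_general S n x y h5 h1 k π ν hopt
  have hp5_le := N5ltCount_div_numBlocks_le_one (x := x) (y := y) hopt.1 hopt.2.1
  have hprod := mul_sub_le_mul_of_sub_half_le hε₁.le (by positivity) hp5_le (by norm_num)
    (by norm_num) hp5 hp1
  exact ⟨hprod.trans hgain, by linarith⟩
end
end

section
/- For every ε₁ > 0 there exists ε₀ > 0 such that for every ε ∈ (0, ε₀) with S > 16/ε there is a constant γ_c > 0, independent of n, with P(Cⁿ) ≥ 1 − e^{−γ_c n} for all n, where Cⁿ is the event that every optimal alignment v ∈ V of X and Y satisfies N_{5<}(v)/N_5(v) ≥ 31/32 − ε₁/4. -/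
/-!
Cut `x` and `y` at the aligned pairs of ones into pairs of segments `(u_j, w_j)`. A given cut occurs
with probability at most `∏ 2^{-|u_j|-1} 2^{-|w_j|-1}`, so by an exponential Markov bound the
probability that some cut into `m` pairs has score at least `-c` is at most `e^c Z^m`, where `Z` is
the exponential moment of the score of a single pair under these weights. Five-blocks
(`u = 00000`, `w` a block of zeros) score `l (31/32 - δ - 1[|w| < 5])`, with `δ = ε₁ / 4`, and
every skipped one costs `a`. A block of zeros is shorter than five with probability exactly `31/32`,
so for small `l` the five-blocks contribute less than their mass to `Z`, while for large `a` the
pairs with skipped ones contribute next to nothing; hence `Z < 1`.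

An alignment in `V` with `m` aligned pairs of ones and ratio below `31/32 - δ` gives a cut of score
at least `-(l + a ε m / 2)`; the `l` pays for the first segments, which are not enclosed by two
aligned ones. As `m ≥ n / 4`, this is exponentially unlikely in `n` once `e^{a ε / 2} Z < 1`. For
the remaining small `n` it is enough that two strings of zeros have no alignment in `V`.
-/

open scoped Classical
open Finset

noncomputable section

/-- The position in `x` of the last one of `x` matched by the alignment `(π, ν)`
(0 if there is none). -/
def lastMatchedX {n k : ℕ} (x y : Fin n → Bool) (π ν : Fin k → Fin n) : ℕ :=
  (Finset.univ.filter (matchedPair x y π ν)).sup fun i => (π i : ℕ)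

/-- The position in `y` of the last one of `y` matched by the alignment `(π, ν)`
(0 if there is none). -/
def lastMatchedY {n k : ℕ} (x y : Fin n → Bool) (π ν : Fin k → Fin n) : ℕ :=
  (Finset.univ.filter (matchedPair x y π ν)).sup fun i => (ν i : ℕ)

/-- The number of ones of `x`, counted up to the last aligned pair of ones, which do not
belong to an aligned pair of ones of `(π, ν)`. -/
def skippedOnesX {n k : ℕ} (x y : Fin n → Bool) (π ν : Fin k → Fin n) : ℕ :=
  (Finset.univ.filter fun j : Fin n => x j = true ∧ (j : ℕ) ≤ lastMatchedX x y π ν ∧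
    ∀ i : Fin k, matchedPair x y π ν i → π i ≠ j).card

/-- The number of ones of `y`, counted up to the last aligned pair of ones, which do not
belong to an aligned pair of ones of `(π, ν)`. -/
def skippedOnesY {n k : ℕ} (x y : Fin n → Bool) (π ν : Fin k → Fin n) : ℕ :=
  (Finset.univ.filter fun j : Fin n => y j = true ∧ (j : ℕ) ≤ lastMatchedY x y π ν ∧
    ∀ i : Fin k, matchedPair x y π ν i → ν i ≠ j).card

/-- The alignment `(π, ν)` (encoded by its skipped-ones tuple `v`) belongs to
`V = ∪_{k ≥ (1/2 - ε/8)n} Vᵏ`: it aligns at least `(1/2 - ε/8)n` pairs of ones and the total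
number of skipped ones is at most `ε/2` times the number of aligned pairs of ones. -/
def inV (ε : ℝ) {n k : ℕ} (x y : Fin n → Bool) (π ν : Fin k → Fin n) : Prop :=
  ((1 : ℝ) / 2 - ε / 8) * n ≤ (numMatched x y π ν : ℝ) ∧
  (skippedOnesX x y π ν + skippedOnesY x y π ν : ℝ) ≤ ε * (numMatched x y π ν : ℝ) / 2

open Filter Topology
open scoped ENNReal

variable {n m k : ℕ}

/-! ### Sums over tuples and lists -/

lemma tsum_pi_prod_eq_pow {α : Type*} (f : α → ℝ≥0∞) (m : ℕ) :
    ∑' s : Fin m → α, ∏ j, f (s j) = (∑' a, f a) ^ m := by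
  induction m with
  | zero => simp
  | succ m ih =>
    calc ∑' s : Fin (m + 1) → α, ∏ j, f (s j)
        = ∑' p : α × (Fin m → α), f p.1 * ∏ j, f (p.2 j) := by
          rw [← (Fin.consEquiv fun _ => α).tsum_eq]
          simp [Fin.consEquiv, Fin.prod_univ_succ]
      _ = (∑' a, f a) ^ (m + 1) := by
          rw [ENNReal.tsum_prod (f := fun a (s : Fin m → α) => f a * ∏ j, f (s j)), pow_succ', ← ih]
          simp_rw [ENNReal.tsum_mul_left, ENNReal.tsum_mul_right]

lemma tsum_list_prod_map {α : Type*} (f : α → ℝ≥0∞) :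
    ∑' l : List α, (l.map f).prod = (1 - ∑' a, f a)⁻¹ := by
  rw [← ENNReal.tsum_geometric, ← List.equivSigmaTuple.symm.tsum_eq, ENNReal.tsum_sigma']
  refine tsum_congr fun m => ?_
  simp [← tsum_pi_prod_eq_pow, List.equivSigmaTuple, List.map_ofFn, List.prod_ofFn]

/-! ### Events for two independent uniform strings -/

section probXY

variable {E F : (Fin n → Bool) → (Fin n → Bool) → Prop}

lemma card_univ_pairs : (univ : Finset ((Fin n → Bool) × (Fin n → Bool))).card = 4 ^ n := by
  simp [← mul_pow]

lemma probXY_mono (h : ∀ x y, E x y → F x y) : probXY n E ≤ probXY n F := by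
  unfold probXY
  gcongr with p
  exact h p.1 p.2

lemma probXY_not : probXY n (fun x y => ¬ E x y) = 1 - probXY n E := by
  rw [eq_sub_iff_add_eq', probXY, probXY, ← add_div, div_eq_one_iff_eq (by positivity),
    ← Nat.cast_add, card_filter_add_card_filter_not, card_univ_pairs, Nat.cast_pow, Nat.cast_ofNat]

lemma probXY_nonneg : 0 ≤ probXY n E := by
  unfold probXY
  positivity

lemma probXY_le_one : probXY n E ≤ 1 := by
  linarith [probXY_not (E := E), probXY_nonneg (E := fun x y => ¬ E x y)]

lemma probXY_lt_one {x y : Fin n → Bool} (h : ¬ E x y) : probXY n E < 1 := by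
  rw [probXY, div_lt_one (by positivity)]
  have : (univ.filter fun p : (Fin n → Bool) × (Fin n → Bool) => E p.1 p.2).card < 4 ^ n := by
    rw [← card_univ_pairs]
    exact card_lt_univ_of_notMem (x := (x, y)) (by simpa using h)
  exact_mod_cast this

lemma probXY_exists_le_sum {ι : Type*} (I : Finset ι)
    (E : ι → (Fin n → Bool) → (Fin n → Bool) → Prop) :
    probXY n (fun x y => ∃ i ∈ I, E i x y) ≤ ∑ i ∈ I, probXY n (E i) := by
  simp only [probXY, ← sum_div]
  gcongr
  have : (univ.filter fun p : (Fin n → Bool) × (Fin n → Bool) => ∃ i ∈ I, E i p.1 p.2) =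
      I.biUnion fun i => univ.filter fun p => E i p.1 p.2 := by
    ext; simp
  rw [this]
  exact_mod_cast card_biUnion_le

lemma ofReal_probXY : ENNReal.ofReal (probXY n E) =
    (∑ p : (Fin n → Bool) × (Fin n → Bool), if E p.1 p.2 then 1 else 0) / 4 ^ n := by
  rw [probXY, ENNReal.ofReal_div_of_pos (by positivity), sum_boole, ENNReal.ofReal_natCast,
    ENNReal.ofReal_pow (by norm_num), ENNReal.ofReal_ofNat]

lemma ofReal_probXY_le_tsum {ι : Type*} (w : ι → ℝ≥0∞)
    (F : ι → (Fin n → Bool) → (Fin n → Bool) → Prop)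
    (h : ∀ x y, E x y → ∃ i, F i x y ∧ 1 ≤ w i) :
    ENNReal.ofReal (probXY n E) ≤ ∑' i, w i * ENNReal.ofReal (probXY n (F i)) := by
  simp only [ofReal_probXY, div_eq_mul_inv, ← mul_assoc, ENNReal.tsum_mul_right]
  gcongr
  simp only [mul_sum]
  rw [Summable.tsum_finsetSum fun _ _ => ENNReal.summable]
  refine sum_le_sum fun p _ => ?_
  split_ifs with hp
  · obtain ⟨i, hF, hw⟩ := h _ _ hp
    calc (1 : ℝ≥0∞) ≤ w i * if F i p.1 p.2 then 1 else 0 := by simpa [hF] using hw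
      _ ≤ _ := ENNReal.le_tsum i
  · exact zero_le

lemma probXY_and (A B : (Fin n → Bool) → Prop) :
    probXY n (fun x y => A x ∧ B y) = probX n A * probX n B := by
  rw [probXY, probX, probX, div_mul_div_comm, ← mul_pow, ← Nat.cast_mul, ← card_product]
  congr 4
  · ext; simp
  · norm_num

end probXY

-- `<+:` comes with its own `DecidablePred` instance, unlike the classical one in `probX`.
lemma probX_eq_card (E : (Fin n → Bool) → Prop) [DecidablePred E] :
    probX n E = (univ.filter E).card / 2 ^ n := by
  unfold probX
  congr!

lemma probX_isPrefix_le (u : List Bool) :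
    probX n (fun x => u <+: List.ofFn x) ≤ (1 / 2) ^ u.length := by
  rcases le_or_gt u.length n with hu | hu
  · have hsub : (univ.filter fun x : Fin n → Bool => u <+: List.ofFn x) ⊆
        univ.image fun (v : Fin (n - u.length) → Bool) (i : Fin n) =>
          (u ++ List.ofFn v).getD i false := by
      intro x hx
      obtain ⟨v, hv⟩ := (mem_filter.1 hx).2
      obtain ⟨v, rfl⟩ : ∃ v' : Fin (n - u.length) → Bool, List.ofFn v' = v := by
        have hlen : v.length = n - u.length := by
          have := congrArg List.length hv
          simp only [List.length_append, List.length_ofFn] at this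
          lia
        exact hlen ▸ ⟨v.get, List.ofFn_get v⟩
      exact mem_image.2 ⟨v, mem_univ _, funext fun i => by simp [hv]⟩
    have hcard : (univ.filter fun x : Fin n → Bool => u <+: List.ofFn x).card ≤
        2 ^ (n - u.length) := by
      simpa using (card_le_card hsub).trans card_image_le
    rw [probX_eq_card, div_le_iff₀ (by positivity), one_div, inv_pow, mul_comm,
      ← pow_sub₀ (2 : ℝ) two_ne_zero hu]
    exact_mod_cast hcard
  · have hempty : (univ.filter fun x : Fin n → Bool => u <+: List.ofFn x) = ∅ :=
      filter_eq_empty_iff.2 fun x _ hx => by simpa using hu.trans_le hx.length_le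
    rw [probX_eq_card, hempty, card_empty, Nat.cast_zero, zero_div]
    positivity

/-! ### Cuts -/

/-- The string `s 0, 1, s 1, 1, …`: each segment is followed by a delimiting one. -/
def joinOnes (s : Fin m → List Bool) : List Bool :=
  (List.ofFn fun j => s j ++ [true]).flatten

lemma length_joinOnes (s : Fin m → List Bool) :
    (joinOnes s).length = ∑ j, ((s j).length + 1) := by
  simp [joinOnes, List.length_flatten, List.map_ofFn, List.sum_ofFn, Function.comp_def]

/-- The pairs of segments `s` are cut out of `x` and `y` by `m` ones of each string, the first
segments starting at the beginning of the strings. The segments may contain ones themselves. -/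
def IsCut (s : Fin m → List Bool × List Bool) (x y : Fin n → Bool) : Prop :=
  joinOnes (fun j => (s j).1) <+: List.ofFn x ∧ joinOnes (fun j => (s j).2) <+: List.ofFn y

/-- The probability that a uniform random binary sequence starts with `u` followed by a one. -/
def segProb (u : List Bool) : ℝ≥0∞ := 2⁻¹ ^ (u.length + 1)

lemma ofReal_probXY_isCut_le (s : Fin m → List Bool × List Bool) :
    ENNReal.ofReal (probXY n (IsCut s)) ≤ ∏ j, segProb (s j).1 * segProb (s j).2 := by
  have hprob : probXY n (IsCut s) ≤
      ∏ j, (1 / 2) ^ ((s j).1.length + 1) * (1 / 2) ^ ((s j).2.length + 1) := by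
    rw [prod_mul_distrib, prod_pow_eq_pow_sum, prod_pow_eq_pow_sum,
      ← length_joinOnes fun j => (s j).1, ← length_joinOnes fun j => (s j).2]
    refine (probXY_and _ _).trans_le ?_
    gcongr
    · unfold probX; positivity
    · exact probX_isPrefix_le _
    · exact probX_isPrefix_le _
  refine (ENNReal.ofReal_le_ofReal hprob).trans_eq ?_
  rw [ENNReal.ofReal_prod_of_nonneg fun _ _ => by positivity]
  refine prod_congr rfl fun j _ => ?_
  rw [ENNReal.ofReal_mul (by positivity), ENNReal.ofReal_pow (by norm_num),
    ENNReal.ofReal_pow (by norm_num), one_div, ENNReal.ofReal_inv_of_pos two_pos,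
    ENNReal.ofReal_ofNat, segProb, segProb]

/-- The exponential moment of the score `G` over all pairs of segments. Since segments may contain
ones, the weights `segProb` have infinite total mass; `G` has to penalize the ones. -/
def cutSum (G : List Bool × List Bool → ℝ) : ℝ≥0∞ :=
  ∑' s, segProb s.1 * segProb s.2 * ENNReal.ofReal (Real.exp (G s))

lemma ofReal_probXY_exists_isCut_le (G : List Bool × List Bool → ℝ) (c : ℝ) :
    ENNReal.ofReal (probXY n fun x y =>
        ∃ s : Fin m → List Bool × List Bool, IsCut s x y ∧ -c ≤ ∑ j, G (s j)) ≤
      ENNReal.ofReal (Real.exp c) * cutSum G ^ m := by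
  rw [cutSum, ← tsum_pi_prod_eq_pow, ← ENNReal.tsum_mul_left]
  refine (ofReal_probXY_le_tsum
    (fun s : Fin m → _ => ENNReal.ofReal (Real.exp (c + ∑ j, G (s j)))) IsCut ?_).trans ?_
  · rintro x y ⟨s, hs, hc⟩
    exact ⟨s, hs, by rw [ENNReal.one_le_ofReal, Real.one_le_exp_iff]; linarith⟩
  · refine ENNReal.tsum_le_tsum fun s => ?_
    calc _ ≤ ENNReal.ofReal (Real.exp (c + ∑ j, G (s j))) *
          ∏ j, segProb (s j).1 * segProb (s j).2 := by
          gcongr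
          exact ofReal_probXY_isCut_le s
      _ = _ := by
          rw [Real.exp_add, Real.exp_sum, ENNReal.ofReal_mul (by positivity),
            ENNReal.ofReal_prod_of_nonneg fun _ _ => by positivity, mul_assoc,
            mul_comm (∏ j, ENNReal.ofReal _), ← prod_mul_distrib]

lemma probXY_exists_isCut_le {G : List Bool × List Bool → ℝ} (hG : cutSum G ≠ ∞) (c : ℝ) :
    probXY n (fun x y =>
        ∃ s : Fin m → List Bool × List Bool, IsCut s x y ∧ -c ≤ ∑ j, G (s j)) ≤
      Real.exp c * (cutSum G).toReal ^ m := by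
  have h := ofReal_probXY_exists_isCut_le (n := n) (m := m) G c
  rw [← ENNReal.ofReal_toReal hG, ← ENNReal.ofReal_pow (by positivity),
    ← ENNReal.ofReal_mul (by positivity)] at h
  exact (ENNReal.ofReal_le_ofReal_iff (by positivity)).1 h

/-! ### The exponential moment of five-blocks -/

/-- A pair of segments as counted by `N5count`: the first one is a block of exactly five zeros, the
second one a block of zeros of arbitrary length. -/
def IsFiveBlock (s : List Bool × List Bool) : Prop :=
  s.1.length = 5 ∧ true ∉ s.1 ∧ true ∉ s.2

/-- Its sum over the segments of an alignment is `(31/32 - δ) N₅ - N₅<`, up to the contribution of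
the first pair of segments. -/
def fiveBlockScore (δ : ℝ) (s : List Bool × List Bool) : ℝ :=
  if IsFiveBlock s then 31 / 32 - δ - if s.2.length < 5 then 1 else 0 else 0

/-- The number of ones skipped by a pair of segments. -/
def numSkipped (s : List Bool × List Bool) : ℕ := s.1.count true + s.2.count true

lemma tsum_segProb_mul_pow_count (η : ℝ≥0∞) :
    ∑' u, segProb u * η ^ u.count true = (1 - η)⁻¹ := by
  have hprod (u : List Bool) : segProb u * η ^ u.count true =
      2⁻¹ * (u.map fun b => 2⁻¹ * bif b then η else 1).prod := by
    induction u with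
    | nil => simp [segProb]
    | cons b u ih =>
      rw [List.map_cons, List.prod_cons, mul_left_comm, ← ih]
      cases b <;> simp [segProb, pow_succ] <;> ring
  have hhalf : 1 - (2⁻¹ * η + 2⁻¹) = 2⁻¹ * (1 - η) := by
    rw [add_comm, tsub_add_eq_tsub_tsub, ENNReal.one_sub_inv_two, ENNReal.mul_sub (by simp),
      mul_one]
  simp_rw [hprod]
  rw [ENNReal.tsum_mul_left, tsum_list_prod_map, tsum_bool]
  simp only [cond_true, cond_false, mul_one]
  rw [add_comm, hhalf, ENNReal.mul_inv (by simp) (by simp), inv_inv, ← mul_assoc,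
    ENNReal.inv_mul_cancel (by simp) (by simp), one_mul]

lemma tsum_segProb_mul_pow_numSkipped (η : ℝ≥0∞) :
    ∑' s : List Bool × List Bool, segProb s.1 * segProb s.2 * η ^ numSkipped s =
      (1 - η)⁻¹ ^ 2 := by
  calc ∑' s : List Bool × List Bool, segProb s.1 * segProb s.2 * η ^ numSkipped s
      = ∑' (u) (v), segProb u * η ^ u.count true * (segProb v * η ^ v.count true) := by
        rw [← ENNReal.tsum_prod]
        exact tsum_congr fun s => by rw [numSkipped, pow_add, mul_mul_mul_comm]
    _ = (1 - η)⁻¹ ^ 2 := by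
        simp_rw [ENNReal.tsum_mul_left, ENNReal.tsum_mul_right, tsum_segProb_mul_pow_count, sq]

lemma isFiveBlock_iff {s : List Bool × List Bool} :
    IsFiveBlock s ↔ ∃ h, (List.replicate 5 false, List.replicate h false) = s := by
  constructor
  · rintro ⟨h5, hx, hy⟩
    refine ⟨s.2.length, Prod.ext ?_ ?_⟩
    · exact (List.eq_replicate_iff.2 ⟨h5, fun b hb => by grind⟩).symm
    · exact (List.eq_replicate_iff.2 ⟨rfl, fun b hb => by grind⟩).symm
  · rintro ⟨h, rfl⟩
    simp [IsFiveBlock]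

lemma tsum_isFiveBlock (g : ℕ → ℝ≥0∞) :
    ∑' s, (if IsFiveBlock s then segProb s.1 * segProb s.2 * g s.2.length else 0) =
      2⁻¹ ^ 6 * ∑' h, 2⁻¹ ^ (h + 1) * g h := by
  have hinj : Function.Injective fun h : ℕ => (List.replicate 5 false, List.replicate h false) :=
    fun a b hab => by simpa using congrArg (fun s => s.2.length) hab
  rw [← ENNReal.tsum_mul_left, ← hinj.tsum_eq]
  · refine tsum_congr fun h => ?_
    rw [if_pos (isFiveBlock_iff.2 ⟨h, rfl⟩)]
    simp [segProb, mul_assoc]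
  · intro s hs
    exact isFiveBlock_iff.1 (by_contra fun h => hs (if_neg h))

/-- The exponential moment of `l` times `fiveBlockScore δ` over a block of zeros whose length is
geometrically distributed: it is at most four with probability `31/32`. -/
def fiveBlockMoment (δ l : ℝ) : ℝ :=
  31 / 32 * Real.exp (l * (31 / 32 - δ - 1)) + 1 / 32 * Real.exp (l * (31 / 32 - δ))

lemma tsum_inv_two_pow_succ : ∑' h : ℕ, (2⁻¹ : ℝ≥0∞) ^ (h + 1) = 1 := by
  rw [ENNReal.tsum_geometric_add_one, ENNReal.one_sub_inv_two, inv_inv,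
    ENNReal.inv_mul_cancel (by simp) (by simp)]

lemma tsum_geometric_mul_ite_lt_five (A B : ℝ≥0∞) :
    ∑' h : ℕ, 2⁻¹ ^ (h + 1) * (if h < 5 then A else B) =
      ENNReal.ofReal (31 / 32) * A + ENNReal.ofReal (1 / 32) * B := by
  have hhead : ∑ h ∈ range 5, (2⁻¹ : ℝ≥0∞) ^ (h + 1) = ENNReal.ofReal (31 / 32) := by
    rw [← ENNReal.ofReal_ofNat 2, ← ENNReal.ofReal_inv_of_pos two_pos]
    simp_rw [← ENNReal.ofReal_pow (inv_nonneg.2 zero_le_two)]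
    rw [← ENNReal.ofReal_sum_of_nonneg fun _ _ => by positivity]
    norm_num [sum_range_succ]
  have htail : ∑' h : ℕ, (2⁻¹ : ℝ≥0∞) ^ (h + 5 + 1) = ENNReal.ofReal (1 / 32) := by
    simp_rw [add_right_comm _ 5 1, pow_add _ (_ + 1) 5]
    rw [ENNReal.tsum_mul_right, tsum_inv_two_pow_succ, one_mul, ← ENNReal.ofReal_ofNat 2,
      ← ENNReal.ofReal_inv_of_pos two_pos, ← ENNReal.ofReal_pow (by positivity)]
    norm_num
  rw [← Summable.sum_add_tsum_nat_add' (k := 5) ENNReal.summable, ← hhead, ← htail, sum_mul,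
    ← ENNReal.tsum_mul_right]
  exact congrArg₂ _ (sum_congr rfl fun h hh => by rw [if_pos (mem_range.1 hh)]) (by simp)

lemma exists_fiveBlockMoment_lt_one {δ : ℝ} (hδ : 0 < δ) : ∃ l > 0, fiveBlockMoment δ l < 1 := by
  have hderiv : HasDerivAt (fiveBlockMoment δ) (-δ) 0 := by
    have hexp (c : ℝ) : HasDerivAt (fun l => Real.exp (l * c)) c 0 := by
      simpa using ((hasDerivAt_id (0 : ℝ)).mul_const c).exp
    have h := ((hexp (31 / 32 - δ - 1)).const_mul (31 / 32)).add
      ((hexp (31 / 32 - δ)).const_mul (1 / 32))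
    exact h.congr_deriv (by ring)
  have hzero : fiveBlockMoment δ 0 = 1 := by norm_num [fiveBlockMoment]
  obtain ⟨l, hslope, hl⟩ := ((hderiv.tendsto_slope_zero_right.eventually_lt_const
    (neg_lt_zero.2 hδ)).and self_mem_nhdsWithin).exists
  refine ⟨l, hl, ?_⟩
  rw [zero_add, hzero, smul_eq_mul] at hslope
  exact sub_neg.1 (neg_of_mul_neg_right hslope (inv_pos.2 hl).le)

/-- Pairs of segments are rewarded for five-blocks and penalized for skipping ones. -/
def penalizedScore (δ l a : ℝ) (s : List Bool × List Bool) : ℝ :=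
  l * fiveBlockScore δ s - a * numSkipped s

-- The mass `2⁻¹ ^ 6` of the five-blocks is added on the left to avoid truncated subtraction.
lemma cutSum_penalizedScore_add (δ l a : ℝ) :
    cutSum (penalizedScore δ l a) + 2⁻¹ ^ 6 =
      (1 - ENNReal.ofReal (Real.exp (-a)))⁻¹ ^ 2 +
        2⁻¹ ^ 6 * ENNReal.ofReal (fiveBlockMoment δ l) := by
  set η := ENNReal.ofReal (Real.exp (-a))
  set g : ℕ → ℝ≥0∞ := fun h => if h < 5 then ENNReal.ofReal (Real.exp (l * (31 / 32 - δ - 1)))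
    else ENNReal.ofReal (Real.exp (l * (31 / 32 - δ)))
  have hmoment : ∑' h, 2⁻¹ ^ (h + 1) * g h = ENNReal.ofReal (fiveBlockMoment δ l) := by
    rw [tsum_geometric_mul_ite_lt_five, fiveBlockMoment, ENNReal.ofReal_add (by positivity)
      (by positivity), ENNReal.ofReal_mul (by norm_num), ENNReal.ofReal_mul (by norm_num)]
  have hgeom : ∑' h, 2⁻¹ ^ (h + 1) * (fun _ : ℕ => (1 : ℝ≥0∞)) h = 1 := by
    simp only [mul_one, tsum_inv_two_pow_succ]
  have hexp (s : List Bool × List Bool) : ENNReal.ofReal (Real.exp (penalizedScore δ l a s)) =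
      η ^ numSkipped s * if IsFiveBlock s then g s.2.length else 1 := by
    rw [penalizedScore, sub_eq_neg_add, Real.exp_add, ENNReal.ofReal_mul (by positivity),
      ← neg_mul, mul_comm (-a), Real.exp_nat_mul, ENNReal.ofReal_pow (by positivity),
      fiveBlockScore]
    split_ifs <;> simp [η, g, *]
  nth_rw 1 [← mul_one (2⁻¹ ^ 6), ← hgeom, ← hmoment, ← tsum_isFiveBlock, ← tsum_isFiveBlock,
    cutSum, ← tsum_segProb_mul_pow_numSkipped, ← ENNReal.tsum_add, ← ENNReal.tsum_add]
  refine tsum_congr fun s => ?_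
  rw [hexp]
  split_ifs with hs
  · have : numSkipped s = 0 := by
      simp [numSkipped, List.count_eq_zero.2 hs.2.1, List.count_eq_zero.2 hs.2.2]
    simp [this, add_comm]
  · simp [mul_assoc]

lemma exists_cutSum_penalizedScore_lt_one {δ : ℝ} (hδ : 0 < δ) :
    ∃ l > 0, ∃ a > 0, cutSum (penalizedScore δ l a) < 1 := by
  obtain ⟨l, hl, hmoment⟩ := exists_fiveBlockMoment_lt_one hδ
  have hlim : Tendsto (fun a : ℝ => (1 - ENNReal.ofReal (Real.exp (-a)))⁻¹ ^ 2 +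
      2⁻¹ ^ 6 * ENNReal.ofReal (fiveBlockMoment δ l)) atTop
      (𝓝 (1 + 2⁻¹ ^ 6 * ENNReal.ofReal (fiveBlockMoment δ l))) := by
    have hη : Tendsto (fun a : ℝ => ENNReal.ofReal (Real.exp (-a))) atTop (𝓝 0) := by
      simpa using ENNReal.tendsto_ofReal Real.tendsto_exp_neg_atTop_nhds_zero
    have hinv := (ENNReal.Tendsto.sub (tendsto_const_nhds (x := 1)) hη (by simp)).inv
    simpa using (ENNReal.Tendsto.pow (n := 2) hinv).add_const _
  have hlt : 1 + 2⁻¹ ^ 6 * ENNReal.ofReal (fiveBlockMoment δ l) < 1 + 2⁻¹ ^ 6 := by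
    refine ENNReal.add_lt_add_left ENNReal.one_ne_top ?_
    rw [← ENNReal.ofReal_lt_one] at hmoment
    calc (2⁻¹ : ℝ≥0∞) ^ 6 * ENNReal.ofReal (fiveBlockMoment δ l) < 2⁻¹ ^ 6 * 1 :=
          ENNReal.mul_lt_mul_right (by simp) (by simp) hmoment
      _ = 2⁻¹ ^ 6 := mul_one _
  obtain ⟨a, hsum, ha⟩ :=
    ((hlim.eventually_lt_const hlt).and (eventually_gt_atTop 0)).exists
  refine ⟨l, hl, a, ha, ?_⟩
  rw [← cutSum_penalizedScore_add] at hsum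
  exact lt_of_add_lt_add_right hsum

/-! ### The segments cut out by a set of positions -/

/-- The positions between the `(j-1)`-st and the `j`-th of the positions `P`; for `j = 0`, all
positions before `P 0`. -/
def gap (P : Fin m → Fin n) (j : Fin m) : Finset (Fin n) :=
  univ.filter fun t => t < P j ∧ ∀ i < j, P i < t

/-- The letters of `x` on `gap P j`. -/
def gapWord (x : Fin n → Bool) (P : Fin m → Fin n) (j : Fin m) : List Bool :=
  (gap P j).sort.map x

section gap

variable {x : Fin n → Bool} {P : Fin m → Fin n}

lemma mem_gap {j : Fin m} {t : Fin n} : t ∈ gap P j ↔ t < P j ∧ ∀ i < j, P i < t := by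
  simp [gap]

lemma gap_eq_Ioo (hP : StrictMono P) {i j : Fin m} (hij : (i : ℕ) + 1 = j) :
    gap P j = Ioo (P i) (P j) := by
  ext t
  rw [mem_gap, mem_Ioo, and_comm]
  refine and_congr_left fun _ => ⟨fun h => h i (by lia), fun h i' hi' => ?_⟩
  exact (hP.monotone (show i' ≤ i by lia)).trans_lt h

lemma length_gapWord (j : Fin m) : (gapWord x P j).length = (gap P j).card := by
  simp [gapWord]

lemma true_notMem_gapWord {j : Fin m} : true ∉ gapWord x P j ↔ ∀ t ∈ gap P j, x t = false := by
  simp [gapWord]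

lemma count_true_gapWord (j : Fin m) :
    (gapWord x P j).count true = ((gap P j).filter fun t => x t = true).card := by
  rw [gapWord, ← Multiset.coe_count, ← Multiset.map_coe, Finset.sort_eq, Multiset.count_map]
  simp only [eq_comm, card_def, filter_val]

lemma disjoint_gap {i j : Fin m} (hij : i ≠ j) : Disjoint (gap P i) (gap P j) := by
  refine disjoint_left.2 fun t hi hj => ?_
  rcases hij.lt_or_gt with h | h
  · exact (mem_gap.1 hi).1.asymm ((mem_gap.1 hj).2 i h)
  · exact (mem_gap.1 hj).1.asymm ((mem_gap.1 hi).2 j h)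

lemma ne_of_mem_gap (hP : StrictMono P) {j : Fin m} {t : Fin n} (ht : t ∈ gap P j) (i : Fin m) :
    P i ≠ t := by
  rcases lt_or_ge i j with hij | hji
  · exact ((mem_gap.1 ht).2 i hij).ne
  · exact ((mem_gap.1 ht).1.trans_le (hP.monotone hji)).ne'

lemma sum_count_true_gapWord_le {T : Finset (Fin n)}
    (hT : ∀ j, ∀ t ∈ gap P j, x t = true → t ∈ T) :
    ∑ j, (gapWord x P j).count true ≤ T.card := by
  simp only [count_true_gapWord]
  rw [← card_biUnion fun i _ j _ hij => disjoint_filter_filter (disjoint_gap hij)]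
  refine card_le_card fun t ht => ?_
  obtain ⟨j, -, hj⟩ := mem_biUnion.1 ht
  exact hT j t (mem_filter.1 hj).1 (mem_filter.1 hj).2

lemma mem_gap_sort_append (hP : StrictMono P) {j : Fin m} {t : Fin n} :
    t ∈ (gap P j).sort ++ [P j] ↔ t ≤ P j ∧ ∀ i < j, P i < t := by
  simp only [List.mem_append, mem_sort, mem_gap, List.mem_singleton, le_iff_lt_or_eq]
  refine ⟨?_, by tauto⟩
  rintro (h | rfl)
  · exact ⟨.inl h.1, h.2⟩
  · exact ⟨.inr rfl, fun i hi => hP hi⟩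

lemma exists_mem_gap_sort_append (hP : StrictMono P) {j : Fin m} {t : Fin n} (hj : t ≤ P j) :
    ∃ i, t ∈ (gap P i).sort ++ [P i] := by
  obtain ⟨i, hi, hmin⟩ := wellFounded_lt.has_min {i | t ≤ P i} ⟨j, hj⟩
  exact ⟨i, (mem_gap_sort_append hP).2 ⟨hi, fun i' hi' => not_le.1 fun h => hmin i' h hi'⟩⟩

lemma finRange_eq_flatten_gap (hP : StrictMono P) :
    List.finRange n = (List.ofFn fun j => (gap P j).sort ++ [P j]).flatten ++
      (univ.filter fun t => ∀ j, P j < t).sort := by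
  refine (List.sortedLT_finRange n).eq_of_mem_iff ?_ fun t => ?_
  · rw [List.sortedLT_iff_pairwise, List.pairwise_append, List.pairwise_flatten,
      List.pairwise_ofFn, List.forall_mem_ofFn_iff]
    refine ⟨⟨fun j => ?_, fun i j hij t ht u hu => ?_⟩, (sortedLT_sort _).pairwise,
      fun t ht u hu => ?_⟩
    · simpa [List.pairwise_append, (sortedLT_sort _).pairwise] using
        fun t ht => (mem_gap.1 ht).1
    · exact ((mem_gap_sort_append hP).1 ht).1.trans_lt (((mem_gap_sort_append hP).1 hu).2 i hij)
    · obtain ⟨l, hl, ht⟩ := List.mem_flatten.1 ht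
      obtain ⟨j, rfl⟩ := (List.mem_ofFn' _ _).1 hl
      exact ((mem_gap_sort_append hP).1 ht).1.trans_lt ((mem_filter.1 ((mem_sort _).1 hu)).2 j)
  · simp only [List.mem_finRange, true_iff, List.mem_append, List.mem_flatten, List.mem_ofFn,
      mem_sort, mem_filter_univ]
    by_contra! h
    obtain ⟨j, hj⟩ := h.2
    obtain ⟨i, hi⟩ := exists_mem_gap_sort_append hP hj
    exact h.1 _ ⟨i, rfl⟩ hi

lemma joinOnes_gapWord_isPrefix (hP : StrictMono P) (hx : ∀ j, x (P j) = true) :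
    joinOnes (gapWord x P) <+: List.ofFn x := by
  rw [List.ofFn_eq_map, finRange_eq_flatten_gap hP, List.map_append, List.map_flatten,
    List.map_ofFn]
  simp [joinOnes, gapWord, Function.comp_def, hx]

end gap

/-! ### The cut of an alignment -/

section alignCut

variable {x y : Fin n → Bool} {π ν : Fin k → Fin n}

/-- The increasing enumeration of the indices at which `(π, ν)` aligns a pair of ones. -/
def matchedEmb (x y : Fin n → Bool) (π ν : Fin k → Fin n) : Fin (numMatched x y π ν) ↪o Fin k :=
  (univ.filter (matchedPair x y π ν)).orderEmbOfFin (by rw [numMatched])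

/-- The pairs of segments of `x` and `y` cut out by the pairs of ones aligned by `(π, ν)`. -/
def alignCut (x y : Fin n → Bool) (π ν : Fin k → Fin n) (j : Fin (numMatched x y π ν)) :
    List Bool × List Bool :=
  (gapWord x (π ∘ matchedEmb x y π ν) j, gapWord y (ν ∘ matchedEmb x y π ν) j)

lemma matchedPair_matchedEmb (j : Fin (numMatched x y π ν)) :
    matchedPair x y π ν (matchedEmb x y π ν j) :=
  (mem_filter.1 (orderEmbOfFin_mem _ _ j)).2

lemma exists_matchedEmb_eq {i : Fin k} (hi : matchedPair x y π ν i) :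
    ∃ j, matchedEmb x y π ν j = i := by
  rw [← Set.mem_range, matchedEmb, range_orderEmbOfFin]
  simpa using hi

lemma isCut_alignCut (hπ : StrictMono π) (hν : StrictMono ν) : IsCut (alignCut x y π ν) x y :=
  ⟨joinOnes_gapWord_isPrefix (hπ.comp (OrderEmbedding.strictMono _))
      fun j => (matchedPair_matchedEmb j).1,
    joinOnes_gapWord_isPrefix (hν.comp (OrderEmbedding.strictMono _))
      fun j => (matchedPair_matchedEmb j).2⟩

lemma sum_count_true_gapWord_matchedEmb_le (z : Fin n → Bool) {ρ : Fin k → Fin n}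
    (hρ : StrictMono ρ) :
    ∑ j, (gapWord z (ρ ∘ matchedEmb x y π ν) j).count true ≤
      (univ.filter fun t : Fin n => z t = true ∧
        (t : ℕ) ≤ (univ.filter (matchedPair x y π ν)).sup (fun i => (ρ i : ℕ)) ∧
        ∀ i, matchedPair x y π ν i → ρ i ≠ t).card := by
  refine sum_count_true_gapWord_le fun j t ht hzt => (mem_filter_univ _).2 ⟨hzt, ?_, ?_⟩
  · exact (Fin.val_le_of_le (mem_gap.1 ht).1.le).trans (le_sup (f := fun i => (ρ i : ℕ))
      ((mem_filter_univ _).2 (matchedPair_matchedEmb j)))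
  · intro i hi
    obtain ⟨i, rfl⟩ := exists_matchedEmb_eq hi
    exact ne_of_mem_gap (hρ.comp (OrderEmbedding.strictMono _)) ht i

lemma sum_numSkipped_alignCut_le (hπ : StrictMono π) (hν : StrictMono ν) :
    ∑ j, numSkipped (alignCut x y π ν j) ≤ skippedOnesX x y π ν + skippedOnesY x y π ν := by
  simp only [numSkipped, alignCut, sum_add_distrib]
  exact add_le_add (sum_count_true_gapWord_matchedEmb_le x hπ)
    (sum_count_true_gapWord_matchedEmb_le y hν)

/-- `N5count` counts the pairs of indices which form a five-pair. -/
def IsFivePair (x y : Fin n → Bool) (π ν : Fin k → Fin n) (p : Fin k × Fin k) : Prop :=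
  p.1 < p.2 ∧ matchedPair x y π ν p.1 ∧ matchedPair x y π ν p.2 ∧
    (π p.2 : ℕ) = (π p.1 : ℕ) + 6 ∧
    (∀ j : Fin n, π p.1 < j → j < π p.2 → x j = false) ∧
    (∀ j : Fin n, ν p.1 < j → j < ν p.2 → y j = false)

lemma N5count_eq_card : N5count x y π ν = (univ.filter (IsFivePair x y π ν)).card := by
  simp only [N5count, univ_product_univ]
  congr!

lemma N5ltCount_eq_card : N5ltCount x y π ν =
    (univ.filter fun p => IsFivePair x y π ν p ∧ (ν p.2 : ℕ) < ν p.1 + 6).card := by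
  simp only [N5ltCount, IsFivePair, and_assoc, univ_product_univ]

lemma N5ltCount_le_N5count : N5ltCount x y π ν ≤ N5count x y π ν := by
  rw [N5count_eq_card, N5ltCount_eq_card]
  exact card_le_card (monotone_filter_right _ fun p _ hp => hp.1)

lemma length_snd_alignCut (hν : StrictMono ν) {i j : Fin (numMatched x y π ν)}
    (hij : (i : ℕ) + 1 = j) : (alignCut x y π ν j).2.length =
      (ν (matchedEmb x y π ν j) : ℕ) - ν (matchedEmb x y π ν i) - 1 := by
  rw [alignCut, length_gapWord, gap_eq_Ioo (hν.comp (OrderEmbedding.strictMono _)) hij,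
    Fin.card_Ioo, Function.comp_apply, Function.comp_apply]

lemma isFiveBlock_alignCut_iff (hπ : StrictMono π) (hν : StrictMono ν)
    {i j : Fin (numMatched x y π ν)} (hij : (i : ℕ) + 1 = j) :
    IsFiveBlock (alignCut x y π ν j) ↔
      IsFivePair x y π ν (matchedEmb x y π ν i, matchedEmb x y π ν j) := by
  have hlt : matchedEmb x y π ν i < matchedEmb x y π ν j :=
    (matchedEmb x y π ν).strictMono (by lia)
  have hπlt := hπ hlt
  simp only [IsFiveBlock, IsFivePair, alignCut, length_gapWord, true_notMem_gapWord,
    gap_eq_Ioo (hπ.comp (OrderEmbedding.strictMono _)) hij,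
    gap_eq_Ioo (hν.comp (OrderEmbedding.strictMono _)) hij, Fin.card_Ioo, mem_Ioo, and_imp,
    Function.comp_apply, hlt, matchedPair_matchedEmb, true_and]
  refine and_congr_left fun _ => ?_
  lia

lemma IsFivePair.exists_matchedEmb (hπ : StrictMono π) {p : Fin k × Fin k}
    (hp : IsFivePair x y π ν p) :
    ∃ i j : Fin (numMatched x y π ν), (i : ℕ) + 1 = j ∧
      (matchedEmb x y π ν i, matchedEmb x y π ν j) = p := by
  obtain ⟨a, b⟩ := p
  obtain ⟨hab, ha, hb, -, hzero, -⟩ := hp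
  obtain ⟨i, rfl⟩ := exists_matchedEmb_eq ha
  obtain ⟨j, rfl⟩ := exists_matchedEmb_eq hb
  refine ⟨i, j, ?_, rfl⟩
  have hij : i < j := (matchedEmb x y π ν).lt_iff_lt.1 hab
  by_contra hne
  let l : Fin (numMatched x y π ν) := ⟨i + 1, by lia⟩
  have hil : i < l := by simp [l, Fin.lt_def]
  have hlj : l < j := by simp only [l, Fin.lt_def]; lia
  have := hzero _ (hπ ((matchedEmb x y π ν).strictMono hil))
    (hπ ((matchedEmb x y π ν).strictMono hlj))
  simp [(matchedPair_matchedEmb l).1] at this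

lemma N5count_le_card_isFiveBlock (hπ : StrictMono π) (hν : StrictMono ν) :
    N5count x y π ν ≤ (univ.filter fun j => IsFiveBlock (alignCut x y π ν j)).card := by
  rw [N5count_eq_card, ← card_map (matchedEmb x y π ν).toEmbedding]
  refine card_le_card_of_injOn Prod.snd (fun p hp => ?_) fun p hp q hq hpq => ?_
  · have hp := (mem_filter_univ _).1 hp
    obtain ⟨i, j, hij, rfl⟩ := hp.exists_matchedEmb hπ
    exact mem_map_of_mem _ ((mem_filter_univ _).2 ((isFiveBlock_alignCut_iff hπ hν hij).2 hp))
  · obtain ⟨-, -, -, hp, -⟩ := (mem_filter_univ _).1 hp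
    obtain ⟨-, -, -, hq, -⟩ := (mem_filter_univ _).1 hq
    rw [hpq] at hp
    exact Prod.ext (hπ.injective (Fin.ext (by lia))) hpq

lemma card_isFiveBlock_lt_le_N5ltCount_add_one (hπ : StrictMono π) (hν : StrictMono ν) :
    (univ.filter fun j => IsFiveBlock (alignCut x y π ν j) ∧
      (alignCut x y π ν j).2.length < 5).card ≤ N5ltCount x y π ν + 1 := by
  rw [← card_filter_add_card_filter_not fun j : Fin (numMatched x y π ν) => 0 < (j : ℕ)]
  refine add_le_add ?_ (card_le_one.2 fun i hi j hj => ?_)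
  · rw [N5ltCount_eq_card]
    refine card_le_card_of_injOn
      (fun j => (matchedEmb x y π ν ⟨j - 1, by lia⟩, matchedEmb x y π ν j))
      (fun j hj => ?_) fun i _ j _ hij => (matchedEmb x y π ν).injective (congrArg Prod.snd hij)
    obtain ⟨hj, hpos⟩ := mem_filter.1 hj
    obtain ⟨hfive, hlen⟩ := (mem_filter_univ _).1 hj
    let i : Fin (numMatched x y π ν) := ⟨j - 1, by lia⟩
    have hij : (i : ℕ) + 1 = j := Nat.sub_add_cancel hpos
    have hfive := (isFiveBlock_alignCut_iff hπ hν hij).1 hfive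
    have hlt := hν hfive.1
    rw [length_snd_alignCut hν hij] at hlen
    exact (mem_filter_univ _).2 ⟨hfive, by lia⟩
  · have hi := (mem_filter.1 hi).2
    have hj := (mem_filter.1 hj).2
    lia

lemma sum_fiveBlockScore (δ : ℝ) (s : Fin m → List Bool × List Bool) :
    ∑ j, fiveBlockScore δ (s j) =
      (31 / 32 - δ) * (univ.filter fun j => IsFiveBlock (s j)).card -
        (univ.filter fun j => IsFiveBlock (s j) ∧ (s j).2.length < 5).card := by
  have hsplit (s) : fiveBlockScore δ s = (31 / 32 - δ) * (if IsFiveBlock s then 1 else 0) -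
      if IsFiveBlock s ∧ s.2.length < 5 then 1 else 0 := by
    by_cases hs : IsFiveBlock s <;> simp [fiveBlockScore, hs]
  simp only [hsplit, sum_sub_distrib, ← mul_sum, sum_boole]

lemma neg_one_le_sum_fiveBlockScore {δ : ℝ} (hδ : δ ≤ 31 / 32) (hπ : StrictMono π)
    (hν : StrictMono ν) (h : (N5ltCount x y π ν : ℝ) ≤ (31 / 32 - δ) * N5count x y π ν) :
    -1 ≤ ∑ j, fiveBlockScore δ (alignCut x y π ν j) := by
  have hN5 : (N5count x y π ν : ℝ) ≤ _ := Nat.cast_le.2 (N5count_le_card_isFiveBlock hπ hν)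
  have hN5lt := (Nat.cast_le (α := ℝ)).2
    (card_isFiveBlock_lt_le_N5ltCount_add_one (x := x) (y := y) hπ hν)
  rw [sum_fiveBlockScore]
  push_cast at hN5lt
  linarith [mul_le_mul_of_nonneg_left hN5 (sub_nonneg.2 hδ)]

end alignCut

/-! ### The probability of a bad alignment -/

/-- Some alignment in `V`, optimal or not, has a ratio `N₅<(v)/N₅(v)` below `31/32 - δ`. Note that
the ratio is `0 / 0 = 0` if `N₅(v) = 0`. -/
def HasBadAlignment (δ ε : ℝ) (x y : Fin n → Bool) : Prop :=
  ∃ (k : ℕ) (π ν : Fin k → Fin n), StrictMono π ∧ StrictMono ν ∧ inV ε x y π ν ∧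
    (N5ltCount x y π ν : ℝ) / N5count x y π ν < 31 / 32 - δ

section HasBadAlignment

variable {x y : Fin n → Bool} {π ν : Fin k → Fin n} {δ δ' ε ε' : ℝ}

lemma inV_mono (hε : ε ≤ ε') (h : inV ε x y π ν) : inV ε' x y π ν := by
  constructor
  · refine le_trans ?_ h.1
    gcongr
  · refine h.2.trans ?_
    gcongr

lemma HasBadAlignment.mono (hδ : δ' ≤ δ) (hε : ε ≤ ε') :
    HasBadAlignment δ ε x y → HasBadAlignment δ' ε' x y := by
  rintro ⟨k, π, ν, hπ, hν, hV, hratio⟩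
  exact ⟨k, π, ν, hπ, hν, inV_mono hε hV, by linarith⟩

lemma not_hasBadAlignment_false (hn : n ≠ 0) (hε : ε < 4) :
    ¬ HasBadAlignment δ ε (fun _ : Fin n => false) fun _ => false := by
  rintro ⟨k, π, ν, -, -, ⟨hV, -⟩, -⟩
  have hm : numMatched (fun _ : Fin n => false) (fun _ => false) π ν = 0 := by
    simp [numMatched, matchedPair]
  have hn : (0 : ℝ) < n := by positivity
  rw [hm, Nat.cast_zero] at hV
  nlinarith

lemma numMatched_le (hπ : StrictMono π) : numMatched x y π ν ≤ n := by
  calc numMatched x y π ν ≤ k := (card_le_univ _).trans_eq (Fintype.card_fin k)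
    _ ≤ n := by simpa using Fintype.card_le_of_injective π hπ.injective

lemma le_four_mul_numMatched (hε : ε ≤ 2) (h : inV ε x y π ν) : n ≤ 4 * numMatched x y π ν := by
  have : (n : ℝ) ≤ 4 * numMatched x y π ν := by
    nlinarith [h.1, mul_le_mul_of_nonneg_right hε n.cast_nonneg]
  exact_mod_cast this

lemma N5ltCount_le_mul_N5count
    (h : (N5ltCount x y π ν : ℝ) / N5count x y π ν < 31 / 32 - δ) :
    (N5ltCount x y π ν : ℝ) ≤ (31 / 32 - δ) * N5count x y π ν := by
  have hle : N5ltCount x y π ν ≤ N5count x y π ν := N5ltCount_le_N5count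
  rcases (N5count x y π ν).eq_zero_or_pos with h0 | hpos
  · simp [h0, Nat.eq_zero_of_le_zero (h0 ▸ hle)]
  · exact ((div_lt_iff₀ (Nat.cast_pos.2 hpos)).1 h).le

lemma neg_le_sum_penalizedScore {l a : ℝ} (hl : 0 ≤ l) (ha : 0 ≤ a) (hδ : δ ≤ 31 / 32)
    (hπ : StrictMono π) (hν : StrictMono ν) (hV : inV ε x y π ν)
    (hratio : (N5ltCount x y π ν : ℝ) / N5count x y π ν < 31 / 32 - δ) :
    -(l + a * ε / 2 * numMatched x y π ν) ≤
      ∑ j, penalizedScore δ l a (alignCut x y π ν j) := by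
  have hskip : (∑ j, numSkipped (alignCut x y π ν j) : ℝ) ≤ ε * numMatched x y π ν / 2 :=
    le_trans (by exact_mod_cast sum_numSkipped_alignCut_le hπ hν) hV.2
  have hfive := neg_one_le_sum_fiveBlockScore hδ hπ hν (N5ltCount_le_mul_N5count hratio)
  simp only [penalizedScore, sum_sub_distrib, ← mul_sum]
  linarith [mul_le_mul_of_nonneg_left hfive hl, mul_le_mul_of_nonneg_left hskip ha]

lemma HasBadAlignment.exists_isCut {l a : ℝ} (hl : 0 ≤ l) (ha : 0 ≤ a) (hδ : δ ≤ 31 / 32)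
    (hε : ε ≤ 2) (h : HasBadAlignment δ ε x y) :
    ∃ m ∈ (range (n + 1)).filter fun m => n ≤ 4 * m, ∃ s : Fin m → List Bool × List Bool,
      IsCut s x y ∧ -(l + a * ε / 2 * m) ≤ ∑ j, penalizedScore δ l a (s j) := by
  obtain ⟨k, π, ν, hπ, hν, hV, hratio⟩ := h
  refine ⟨numMatched x y π ν, ?_, alignCut x y π ν, isCut_alignCut hπ hν,
    neg_le_sum_penalizedScore hl ha hδ hπ hν hV hratio⟩
  exact mem_filter.2 ⟨mem_range_succ_iff.2 (numMatched_le hπ), le_four_mul_numMatched hε hV⟩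

lemma probXY_hasBadAlignment_le {l a b : ℝ} (hl : 0 ≤ l) (ha : 0 ≤ a) (hb : 0 ≤ b)
    (hδ : δ ≤ 31 / 32) (hε : ε ≤ 2) (hZ : cutSum (penalizedScore δ l a) ≠ ∞)
    (hr : Real.exp (a * ε / 2) * (cutSum (penalizedScore δ l a)).toReal ≤ Real.exp (-8 * b)) :
    probXY n (HasBadAlignment δ ε) ≤ (n + 1) * Real.exp (l - 2 * b * n) := by
  set Z := (cutSum (penalizedScore δ l a)).toReal
  have hterm : ∀ m ∈ (range (n + 1)).filter fun m => n ≤ 4 * m,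
      probXY n (fun x y => ∃ s : Fin m → List Bool × List Bool,
        IsCut s x y ∧ -(l + a * ε / 2 * m) ≤ ∑ j, penalizedScore δ l a (s j)) ≤
      Real.exp (l - 2 * b * n) := by
    intro m hm
    have hnm : (n : ℝ) ≤ 4 * m := by exact_mod_cast (mem_filter.1 hm).2
    calc _ ≤ Real.exp (l + a * ε / 2 * m) * Z ^ m := probXY_exists_isCut_le hZ _
      _ = Real.exp l * (Real.exp (a * ε / 2) * Z) ^ m := by
          rw [Real.exp_add, mul_comm _ (m : ℝ), Real.exp_nat_mul, mul_assoc, mul_pow]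
      _ ≤ Real.exp l * Real.exp (-8 * b) ^ m := by gcongr
      _ = Real.exp (l - 8 * b * m) := by
          rw [← Real.exp_nat_mul, ← Real.exp_add]
          ring_nf
      _ ≤ Real.exp (l - 2 * b * n) := by
          refine Real.exp_le_exp.2 ?_
          linarith [mul_le_mul_of_nonneg_left hnm hb]
  calc probXY n (HasBadAlignment δ ε)
      ≤ _ := probXY_mono fun x y => HasBadAlignment.exists_isCut hl ha hδ hε
    _ ≤ _ := probXY_exists_le_sum _ _
    _ ≤ _ := sum_le_card_nsmul _ _ _ hterm
    _ ≤ (n + 1) * Real.exp (l - 2 * b * n) := by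
        rw [nsmul_eq_mul]
        gcongr
        exact_mod_cast (card_filter_le _ _).trans_eq (card_range _)

end HasBadAlignment

lemma eventually_succ_mul_exp_le {b : ℝ} (hb : 0 < b) (l : ℝ) :
    ∀ᶠ n : ℕ in atTop, (n + 1) * Real.exp (l - 2 * b * n) ≤ Real.exp (-b * n) := by
  have hlim : Tendsto (fun n : ℕ => (n + 1) * Real.exp (-b) ^ n) atTop (𝓝 0) := by
    have hlt : Real.exp (-b) < 1 := Real.exp_lt_one_iff.2 (neg_lt_zero.2 hb)
    simpa [add_mul] using (tendsto_self_mul_const_pow_of_lt_one (Real.exp_nonneg _) hlt).add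
      (tendsto_pow_atTop_nhds_zero_of_lt_one (Real.exp_nonneg _) hlt)
  filter_upwards [hlim.eventually_le_const (Real.exp_pos (-l))] with n hn
  calc (n + 1) * Real.exp (l - 2 * b * n)
      = (n + 1) * Real.exp (-b) ^ n * Real.exp (l - b * n) := by
        rw [← Real.exp_nat_mul, mul_assoc (n + 1 : ℝ), ← Real.exp_add]
        ring_nf
    _ ≤ Real.exp (-l) * Real.exp (l - b * n) := by gcongr
    _ = Real.exp (-b * n) := by
        rw [← Real.exp_add]
        ring_nf

lemma exists_eventually_probXY_hasBadAlignment_le {δ : ℝ} (hδ : 0 < δ) (hδ' : δ ≤ 31 / 32) :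
    ∃ b ∈ Set.Ioc (0 : ℝ) 2,
      ∀ᶠ n : ℕ in atTop, probXY n (HasBadAlignment δ b) ≤ Real.exp (-b * n) := by
  obtain ⟨l, hl, a, ha, hZ⟩ := exists_cutSum_penalizedScore_lt_one hδ
  set Z := (cutSum (penalizedScore δ l a)).toReal
  have hZ1 : Z < 1 := by simpa [Z] using ENNReal.toReal_strict_mono ENNReal.one_ne_top hZ
  have hsmall : ∀ᶠ b in 𝓝[>] (0 : ℝ), Real.exp (a * b / 2) * Z < Real.exp (-8 * b) := by
    refine nhdsWithin_le_nhds (ContinuousAt.eventually_lt ?_ ?_ (by simpa using hZ1))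
    all_goals fun_prop
  obtain ⟨b, hr, hb⟩ := (hsmall.and (Ioc_mem_nhdsGT zero_lt_two)).exists
  refine ⟨b, hb, (eventually_succ_mul_exp_le hb.1 l).mono fun n hn => le_trans ?_ hn⟩
  exact probXY_hasBadAlignment_le hl.le ha.le hb.1.le hδ' hb.2 hZ.ne_top hr.le

lemma exists_forall_le_exp_neg_mul {p : ℕ → ℝ} {b : ℝ} (hb : 0 < b)
    (hlarge : ∀ᶠ n : ℕ in atTop, p n ≤ Real.exp (-b * n)) (hzero : p 0 ≤ 1)
    (hlt : ∀ n ≠ 0, p n < 1) : ∃ γ > 0, ∀ n : ℕ, p n ≤ Real.exp (-γ * n) := by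
  obtain ⟨N, hN⟩ := eventually_atTop.1 hlarge
  have hsmall (n : ℕ) : ∀ᶠ γ in 𝓝[>] (0 : ℝ), p n ≤ Real.exp (-γ * n) := by
    rcases eq_or_ne n 0 with rfl | hn
    · exact .of_forall fun γ => by simpa using hzero
    · refine nhdsWithin_le_nhds ((ContinuousAt.eventually_lt ?_ ?_
        (by simpa using hlt n hn)).mono fun _ => le_of_lt)
      all_goals fun_prop
  obtain ⟨γ, hγ, hγb⟩ := (((range N).eventually_all.2 fun n _ => hsmall n).and
    (Ioc_mem_nhdsGT hb)).exists
  refine ⟨γ, hγb.1, fun n => ?_⟩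
  rcases lt_or_ge n N with hn | hn
  · exact hγ n (mem_range.2 hn)
  · refine (hN n hn).trans (Real.exp_le_exp.2 ?_)
    gcongr
    exact hγb.2

theorem prob_Cn_event_general {δ : ℝ} (hδ : 0 < δ) :
    ∃ ε₀ > (0 : ℝ), ∃ γ > (0 : ℝ), ∀ ε ≤ ε₀, ∀ n : ℕ,
      1 - Real.exp (-γ * n) ≤ probXY n (fun x y =>
        ∀ (k : ℕ) (π ν : Fin k → Fin n), StrictMono π → StrictMono ν → inV ε x y π ν →
          31 / 32 - δ ≤ (N5ltCount x y π ν : ℝ) / (N5count x y π ν : ℝ)) := by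
  obtain ⟨ε₀, hε₀, hlarge⟩ := exists_eventually_probXY_hasBadAlignment_le
    (lt_min hδ (by norm_num : (0 : ℝ) < 1 / 2)) ((min_le_right _ _).trans (by norm_num))
  obtain ⟨γ, hγ, hbad⟩ := exists_forall_le_exp_neg_mul hε₀.1 hlarge probXY_le_one
    fun n hn => probXY_lt_one (not_hasBadAlignment_false hn (hε₀.2.trans_lt (by norm_num)))
  refine ⟨ε₀, hε₀.1, γ, hγ, fun ε hε n => ?_⟩
  calc 1 - Real.exp (-γ * n)
      ≤ 1 - probXY n (HasBadAlignment (min δ (1 / 2)) ε₀) := sub_le_sub_left (hbad n) 1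
    _ = probXY n (fun x y => ¬ HasBadAlignment (min δ (1 / 2)) ε₀ x y) := probXY_not.symm
    _ ≤ _ := probXY_mono fun x y hgood k π ν hπ hν hV => not_lt.1 fun hratio =>
        hgood (.mono (min_le_left _ _) hε ⟨k, π, ν, hπ, hν, hV, hratio⟩)

/-- for every `ε₁ > 0` there exists `ε₀ > 0` such that for every
`ε ∈ (0, ε₀)` with `S > 16/ε` there is a constant `γ_c > 0`, independent of `n`, with
`P(Cⁿ) ≥ 1 - e^{-γ_c n}` for all `n`, where `Cⁿ` is the event that every optimal alignment
`v ∈ V` of `X` and `Y` satisfies `N₅<(v)/N₅(v) ≥ 31/32 - ε₁/4`. -/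
theorem prob_Cn_event (ε₁ : ℝ) (hε₁ : 0 < ε₁) :
    ∃ ε₀ > (0 : ℝ), ∀ ε : ℝ, 0 < ε → ε < ε₀ → ∀ S : ℝ, 16 / ε < S →
      ∃ γc > (0 : ℝ), ∀ n : ℕ,
        1 - Real.exp (-γc * n) ≤ probXY n (fun x y =>
          ∀ (k : ℕ) (π ν : Fin k → Fin n), IsOptimal S x y π ν → inV ε x y π ν →
            31 / 32 - ε₁ / 4 ≤ (N5ltCount x y π ν : ℝ) / (N5count x y π ν : ℝ)) := by
  obtain ⟨ε₀, hε₀, γ, hγ, h⟩ := prob_Cn_event_general (δ := ε₁ / 4) (by positivity)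
  exact ⟨ε₀, hε₀, fun ε _ hε S _ => ⟨γ, hγ, fun n => (h ε hε.le n).trans <|
    probXY_mono fun x y hgood k π ν hopt => hgood k π ν hopt.1 hopt.2.1⟩⟩
end
end
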